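/- arXiv:quant-ph/0308088 — 2 statements merged into one kernel-verified Lean document; each statement's English description precedes it below -/
import Mathlib

section
/- For every state ρ^{AB} on H_A ⊗ H_B and every n ≥ 1, one has n · E_sq(ρ^{AB}) ≤ E_F((ρ^{AB})^{⊗n}), where (ρ^{AB})^{⊗n} is regarded as a bipartite state with respect to the cut of the n copies of A versus the n copies of B. Consequently squashed entanglement is upper bounded by the entanglement cost E_C(ρ^{AB}) = lim_{n→∞} (1/n) E_F((ρ^{AB})^{⊗n}): E_sq(ρ^{AB}) ≤ E_C(ρ^{AB}). -/
open Matrix BigOperators Kronecker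
open scoped Classical ComplexOrder

noncomputable section

/-- A (quantum) state: positive semidefinite matrix of trace 1. -/
def IsState {n : Type*} [Fintype n] (ρ : Matrix n n ℂ) : Prop :=
  ρ.PosSemidef ∧ ρ.trace = 1

/-- Von Neumann entropy (base 2), via the eigenvalues of a Hermitian matrix. -/
def vonNeumannEntropy {n : Type*} [Fintype n] (ρ : Matrix n n ℂ) : ℝ :=
  if h : ρ.IsHermitian then ∑ i, -(h.eigenvalues i * Real.logb 2 (h.eigenvalues i)) else 0

/-- Partial trace over the second (right) factor. -/
def ptraceR {A B : Type*} [Fintype A] [Fintype B]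
    (ρ : Matrix (A × B) (A × B) ℂ) : Matrix A A ℂ :=
  fun i j => ∑ b, ρ (i, b) (j, b)

/-- Partial trace over the first (left) factor. -/
def ptraceL {A B : Type*} [Fintype A] [Fintype B]
    (ρ : Matrix (A × B) (A × B) ℂ) : Matrix B B ℂ :=
  fun i j => ∑ a, ρ (a, i) (a, j)

variable {A B E : Type*} [Fintype A] [Fintype B] [Fintype E]

/-- Marginal of a tripartite state on `A × E` (trace out `B`). -/
def margAE (ρ : Matrix (A × B × E) (A × B × E) ℂ) : Matrix (A × E) (A × E) ℂ :=
  fun x y => ∑ b, ρ (x.1, b, x.2) (y.1, b, y.2)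

/-- Marginal of a tripartite state on `B × E` (trace out `A`). -/
def margBE (ρ : Matrix (A × B × E) (A × B × E) ℂ) : Matrix (B × E) (B × E) ℂ :=
  fun x y => ∑ a, ρ (a, x.1, x.2) (a, y.1, y.2)

/-- Marginal of a tripartite state on `E` (trace out `A` and `B`). -/
def margE (ρ : Matrix (A × B × E) (A × B × E) ℂ) : Matrix E E ℂ :=
  fun x y => ∑ a, ∑ b, ρ (a, b, x) (a, b, y)

/-- Marginal of a tripartite state on `A × B` (trace out `E`). -/
def margAB (ρ : Matrix (A × B × E) (A × B × E) ℂ) : Matrix (A × B) (A × B) ℂ :=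
  fun x y => ∑ e, ρ (x.1, x.2, e) (y.1, y.2, e)

/-- Quantum conditional mutual information `I(A;B|E) = S(AE)+S(BE)-S(ABE)-S(E)`. -/
def condMutualInfo (ρ : Matrix (A × B × E) (A × B × E) ℂ) : ℝ :=
  vonNeumannEntropy (margAE ρ) + vonNeumannEntropy (margBE ρ)
    - vonNeumannEntropy ρ - vonNeumannEntropy (margE ρ)

/-- Squashed entanglement: infimum of `(1/2) I(A;B|E)` over all finite-dimensional
extensions of `ρ`. -/
def Esq {A B : Type*} [Fintype A] [Fintype B] (ρ : Matrix (A × B) (A × B) ℂ) : ℝ :=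
  sInf { x : ℝ | ∃ (d : ℕ) (ρE : Matrix (A × B × Fin d) (A × B × Fin d) ℂ),
    IsState ρE ∧ margAB ρE = ρ ∧ x = (1 / 2) * condMutualInfo ρE }

/-- Outer product `|ψ⟩⟨ψ|`. -/
def outer {n : Type*} (ψ : n → ℂ) : Matrix n n ℂ :=
  Matrix.vecMulVec ψ (star ψ)

/-- Trace norm of a Hermitian matrix: sum of the absolute values of its eigenvalues. -/
def traceNorm {n : Type*} [Fintype n] (X : Matrix n n ℂ) : ℝ :=
  if h : X.IsHermitian then ∑ i, |h.eigenvalues i| else 0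

/-- Entanglement of formation: infimum of average entanglement entropy over all
finite pure-state ensembles for `ρ`. -/
def EoF {A B : Type*} [Fintype A] [Fintype B] (ρ : Matrix (A × B) (A × B) ℂ) : ℝ :=
  sInf { x : ℝ | ∃ (n : ℕ) (p : Fin n → ℝ) (ψ : Fin n → A × B → ℂ),
    (∀ k, 0 ≤ p k) ∧ (∑ k, p k) = 1 ∧ (∀ k, ∑ i, ‖ψ k i‖ ^ 2 = 1) ∧
    (∑ k, (p k : ℂ) • outer (ψ k)) = ρ ∧
    x = ∑ k, p k * vonNeumannEntropy (ptraceR (outer (ψ k))) }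

/-- The function `η` : `η(x) = -x log₂ x` for `x ≤ 1/4`, `1/2` otherwise. -/
def eta (x : ℝ) : ℝ := if x ≤ 1 / 4 then -(x * Real.logb 2 x) else 1 / 2

/-- The `n`-fold tensor power of a bipartite state, regarded as a bipartite state with
respect to the cut (`n` copies of `A`) versus (`n` copies of `B`). -/
def tensorPow {A B : Type*} (ρ : Matrix (A × B) (A × B) ℂ) (n : ℕ) :
    Matrix ((Fin n → A) × (Fin n → B)) ((Fin n → A) × (Fin n → B)) ℂ :=
  fun x y => ∏ i, ρ (x.1 i, x.2 i) (y.1 i, y.2 i)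


/-! ### Entropy of diagonalised matrices -/

/-- `-z log₂ z` on the real part of a complex number. -/
def etaC (z : ℂ) : ℝ := -(z.re * Real.logb 2 z.re)

lemma etaC_zero : etaC 0 = 0 := by simp [etaC]

lemma entropy_eq_roots {n : Type*} [Fintype n] {ρ : Matrix n n ℂ} (h : ρ.IsHermitian) :
    vonNeumannEntropy ρ = (ρ.charpoly.roots.map etaC).sum := by
  rw [vonNeumannEntropy, dif_pos h, h.roots_charpoly_eq_eigenvalues, Multiset.map_map]
  rfl

lemma roots_sum_mul_comm {m n : Type*} [Fintype m] [Fintype n] [DecidableEq m] [DecidableEq n]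
    (M : Matrix m n ℂ) (N : Matrix n m ℂ) :
    ((M * N).charpoly.roots.map etaC).sum = ((N * M).charpoly.roots.map etaC).sum := by
  have h := congrArg Polynomial.roots (Matrix.charpoly_mul_comm' M N)
  have hx : ∀ k : ℕ, (Polynomial.X ^ k : Polynomial ℂ) ≠ 0 := fun k => pow_ne_zero _ Polynomial.X_ne_zero
  rw [Polynomial.roots_mul (mul_ne_zero (hx _) (Matrix.charpoly_monic _).ne_zero),
    Polynomial.roots_mul (mul_ne_zero (hx _) (Matrix.charpoly_monic _).ne_zero)] at h
  have h2 := congrArg (fun s => (Multiset.map etaC s).sum) h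
  simpa [Polynomial.roots_pow, Polynomial.roots_X, Multiset.map_nsmul, Multiset.sum_nsmul,
    etaC_zero] using h2

lemma entropy_mul_comm {m n : Type*} [Fintype m] [Fintype n]
    (M : Matrix m n ℂ) (N : Matrix n m ℂ) (h1 : (M * N).IsHermitian) (h2 : (N * M).IsHermitian) :
    vonNeumannEntropy (M * N) = vonNeumannEntropy (N * M) := by
  rw [entropy_eq_roots h1, entropy_eq_roots h2, roots_sum_mul_comm]

lemma entropy_transpose {n : Type*} [Fintype n] {ρ : Matrix n n ℂ} (h : ρ.IsHermitian) :
    vonNeumannEntropy ρᵀ = vonNeumannEntropy ρ := by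
  rw [entropy_eq_roots h, entropy_eq_roots h.transpose, Matrix.charpoly_transpose]

lemma entropy_of_diag {n k : Type*} [Fintype n] [Fintype k] [DecidableEq k]
    {ρ : Matrix n n ℂ} (W : Matrix n k ℂ) (d : k → ℝ) (hW : Wᴴ * W = 1)
    (hρ : ρ = W * diagonal (fun i => (d i : ℂ)) * Wᴴ) :
    vonNeumannEntropy ρ = ∑ i, -(d i * Real.logb 2 (d i)) := by
  have hh : ρ.IsHermitian := by
    rw [hρ]
    unfold Matrix.IsHermitian
    simp only [Matrix.conjTranspose_mul, Matrix.conjTranspose_conjTranspose,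
      Matrix.diagonal_conjTranspose, Matrix.mul_assoc]
    congr 3
    ext i
    simp
  rw [entropy_eq_roots hh]
  have e : ρ = W * (diagonal (fun i => (d i : ℂ)) * Wᴴ) := by rw [hρ, Matrix.mul_assoc]
  rw [e, roots_sum_mul_comm, Matrix.mul_assoc, hW, Matrix.mul_one, Matrix.charpoly_diagonal,
    Polynomial.roots_prod _ _ (by simp [Finset.prod_ne_zero_iff, Polynomial.X_sub_C_ne_zero])]
  simp [etaC]

lemma exists_diag {n : Type*} [Fintype n] [DecidableEq n] {ρ : Matrix n n ℂ} (h : ρ.PosSemidef) :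
    ∃ (U : Matrix n n ℂ) (p : n → ℝ), (∀ i, 0 ≤ p i) ∧ Uᴴ * U = 1 ∧ U * Uᴴ = 1 ∧
      ρ = U * diagonal (fun i => (p i : ℂ)) * Uᴴ := by
  refine ⟨h.1.eigenvectorUnitary, h.1.eigenvalues, h.eigenvalues_nonneg, ?_, ?_, ?_⟩
  · exact Unitary.coe_star_mul_self _
  · exact Unitary.coe_mul_star_self _
  · have := h.1.spectral_theorem
    rw [Unitary.conjStarAlgAut_apply] at this
    exact this

lemma entropy_submatrix {m n : Type*} [Fintype m] [Fintype n] {ρ : Matrix n n ℂ}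
    (h : ρ.IsHermitian) (e : m ≃ n) :
    vonNeumannEntropy (ρ.submatrix e e) = vonNeumannEntropy ρ := by
  rw [entropy_eq_roots h, entropy_eq_roots (h.submatrix e)]
  have : ρ.submatrix e e = Matrix.reindex e.symm e.symm ρ := by simp [Matrix.reindex_apply]
  rw [this, Matrix.charpoly_reindex]

lemma entropy_nonneg {n : Type*} [Fintype n] {ρ : Matrix n n ℂ} (h : IsState ρ) :
    0 ≤ vonNeumannEntropy ρ := by
  rw [vonNeumannEntropy, dif_pos h.1.1]
  have hsum : ∑ i, h.1.1.eigenvalues i = 1 := by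
    have := h.1.1.trace_eq_sum_eigenvalues
    have h3 := this.symm.trans h.2
    simpa using congrArg Complex.re h3
  refine Finset.sum_nonneg fun i _ => ?_
  have h0 := h.1.eigenvalues_nonneg i
  have h1 : h.1.1.eigenvalues i ≤ 1 := by
    rw [← hsum]
    exact Finset.single_le_sum (f := h.1.1.eigenvalues) (fun j _ => h.1.eigenvalues_nonneg j)
      (Finset.mem_univ i)
  have := Real.logb_nonpos (b := 2) (by norm_num) h0 h1
  nlinarith

/-! ### The scalar part of monotonicity of relative entropy -/

lemma scalar_cont {w p q : ℝ} (hp : 0 ≤ p) (hs : w * p ≠ 0 → 0 < q) :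
    ContinuousOn (fun T : ℝ => w * p * (Real.log (q + T * p) - Real.log q)) (Set.Ici 0) := by
  by_cases h : w * p = 0
  · simp only [h, zero_mul]; exact continuousOn_const
  · have hq' := hs h
    refine ContinuousOn.mul continuousOn_const (ContinuousOn.sub ?_ continuousOn_const)
    refine ContinuousOn.log (by fun_prop) ?_
    intro T hT
    have : 0 ≤ T * p := mul_nonneg hT hp
    positivity

lemma scalar_deriv {w p q T : ℝ} (hp : 0 ≤ p) (hT : 0 < T)
    (hs : w * p ≠ 0 → 0 < q) :
    HasDerivAt (fun T : ℝ => w * p * (Real.log (q + T * p) - Real.log q))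
      (w * p ^ 2 / (q + T * p)) T := by
  by_cases h : w * p = 0
  · have h2 : w * p ^ 2 = 0 := by rw [pow_two, ← mul_assoc, h, zero_mul]
    simp only [h, h2, zero_mul, zero_div]; exact hasDerivAt_const _ _
  · have hq' := hs h
    have h1 : q + T * p ≠ 0 := by positivity
    have hd : HasDerivAt (fun T : ℝ => q + T * p) p T := by
      simpa using ((hasDerivAt_id T).mul_const p).const_add q
    have := ((hd.log h1).sub_const (Real.log q)).const_mul (w * p)
    exact this.congr_deriv (by ring)

lemma scalar_tendsto {w p q : ℝ} (hp : 0 ≤ p) (hq : 0 ≤ q) :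
    Filter.Tendsto (fun T : ℝ => w * p * (Real.log (q + T * p) - Real.log q)
      - w * p * Real.log T) Filter.atTop (nhds (w * p * (Real.log p - Real.log q))) := by
  by_cases h : w * p = 0
  · simp only [h, zero_mul, sub_zero]; exact tendsto_const_nhds
  · have hp' : 0 < p := lt_of_le_of_ne hp (fun h0 => h (by rw [← h0, mul_zero]))
    have h1 : Filter.Tendsto (fun T : ℝ => q / T + p) Filter.atTop (nhds (0 + p)) :=
      (Filter.Tendsto.div_atTop tendsto_const_nhds Filter.tendsto_id).add tendsto_const_nhds
    rw [zero_add] at h1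
    have h2 := ((h1.log hp'.ne').sub_const (Real.log q)).const_mul (w * p)
    refine h2.congr' ?_
    filter_upwards [Filter.eventually_gt_atTop 0] with T hT
    have : q / T + p = (q + T * p) / T := by field_simp
    rw [this, Real.log_div (by positivity) hT.ne']
    ring

lemma scalar_mono {ι κ : Type*} [Fintype ι] [Fintype κ] (w p q : ι → ℝ) (w' p' q' : κ → ℝ)
    (hp : ∀ i, 0 ≤ p i) (hq : ∀ i, 0 ≤ q i) (hp' : ∀ i, 0 ≤ p' i) (hq' : ∀ i, 0 ≤ q' i)
    (hs : ∀ i, w i * p i ≠ 0 → 0 < q i) (hs' : ∀ i, w' i * p' i ≠ 0 → 0 < q' i)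
    (htr : ∑ i, w i * p i = ∑ i, w' i * p' i)
    (hf : ∀ t : ℝ, 0 < t → ∑ i, w' i * p' i ^ 2 / (q' i + t * p' i) ≤
      ∑ i, w i * p i ^ 2 / (q i + t * p i)) :
    ∑ i, w' i * p' i * (Real.log (p' i) - Real.log (q' i)) ≤
      ∑ i, w i * p i * (Real.log (p i) - Real.log (q i)) := by
  have hmono : MonotoneOn (fun T : ℝ =>
      (∑ i, w i * p i * (Real.log (q i + T * p i) - Real.log (q i)))
      - ∑ i, w' i * p' i * (Real.log (q' i + T * p' i) - Real.log (q' i))) (Set.Ici 0) := by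
    have hder : ∀ T : ℝ, 0 < T → HasDerivAt (fun T : ℝ =>
      (∑ i, w i * p i * (Real.log (q i + T * p i) - Real.log (q i)))
      - ∑ i, w' i * p' i * (Real.log (q' i + T * p' i) - Real.log (q' i)))
      ((∑ i, w i * p i ^ 2 / (q i + T * p i))
        - ∑ i, w' i * p' i ^ 2 / (q' i + T * p' i)) T := by
      intro T hT
      exact HasDerivAt.sub
        (HasDerivAt.fun_sum fun i _ => scalar_deriv (hp i) hT (hs i))
        (HasDerivAt.fun_sum fun i _ => scalar_deriv (hp' i) hT (hs' i))
    refine monotoneOn_of_deriv_nonneg (convex_Ici 0) ?_ ?_ ?_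
    · exact ContinuousOn.sub
        (continuousOn_finsetSum _ fun i _ => scalar_cont (hp i) (hs i))
        (continuousOn_finsetSum _ fun i _ => scalar_cont (hp' i) (hs' i))
    · intro T hT
      rw [interior_Ici] at hT
      exact (hder T hT).differentiableAt.differentiableWithinAt
    · intro T hT
      rw [interior_Ici] at hT
      rw [(hder T hT).deriv]
      exact sub_nonneg.2 (hf T hT)
  have hle : ∀ T : ℝ, 0 ≤ T →
      ∑ i, w' i * p' i * (Real.log (q' i + T * p' i) - Real.log (q' i)) ≤
      ∑ i, w i * p i * (Real.log (q i + T * p i) - Real.log (q i)) := by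
    intro T hT
    have := hmono (Set.mem_Ici.2 le_rfl) (Set.mem_Ici.2 hT) hT
    simpa using this
  have l1 := tendsto_finsetSum Finset.univ
    (fun i _ => scalar_tendsto (w := w i) (hp i) (hq i))
  have l2 := tendsto_finsetSum Finset.univ
    (fun i _ => scalar_tendsto (w := w' i) (hp' i) (hq' i))
  refine le_of_tendsto_of_tendsto l2 l1 ?_
  filter_upwards [Filter.eventually_ge_atTop 0] with T hT
  rw [Finset.sum_sub_distrib, Finset.sum_sub_distrib, ← Finset.sum_mul, ← Finset.sum_mul, htr]
  linarith [hle T hT]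

/-! ### The variational formula -/

/-- The quadratic functional whose maximum is the resolvent quantity. -/
def Jfun {m : Type*} [Fintype m] (ρ σ : Matrix m m ℂ) (t : ℝ) (X : Matrix m m ℂ) : ℝ :=
  2 * (ρ * X).trace.re - (σ * (Xᴴ * X)).trace.re - t * (ρ * (X * Xᴴ)).trace.re

lemma trace_diag_mul {k l : Type*} [Fintype k] [Fintype l] [DecidableEq k]
    (p : k → ℝ) (Y : Matrix k l ℂ) (C : Matrix l k ℂ) :
    (diagonal (fun i => (p i : ℂ)) * (Y * C)).trace.re = ∑ j, ∑ i, p j * (Y j i * C i j).re := by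
  simp only [Matrix.trace, Matrix.diag, Matrix.diagonal_mul]
  simp only [Matrix.mul_apply, Complex.re_sum, Complex.re_ofReal_mul, Finset.mul_sum]

lemma trace_cyc {m a : Type*} [Fintype m] [Fintype a] (W : Matrix m a ℂ) (d : Matrix a a ℂ)
    (Z : Matrix m m ℂ) : (W * d * Wᴴ * Z).trace = (d * (Wᴴ * Z * W)).trace := by
  rw [Matrix.mul_assoc, Matrix.mul_assoc, Matrix.trace_mul_comm]
  simp only [Matrix.mul_assoc]

lemma Jfun_eq {m k l : Type*} [Fintype m] [Fintype k] [Fintype l]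
    [DecidableEq m] [DecidableEq k] [DecidableEq l]
    (U : Matrix m k ℂ) (V : Matrix m l ℂ) (p : k → ℝ) (q : l → ℝ)
    (hU : U * Uᴴ = 1) (hV : V * Vᴴ = 1) (ρ σ : Matrix m m ℂ)
    (hρ : ρ = U * diagonal (fun i => (p i : ℂ)) * Uᴴ)
    (hσ : σ = V * diagonal (fun i => (q i : ℂ)) * Vᴴ) (t : ℝ) (X : Matrix m m ℂ) :
    Jfun ρ σ t X = ∑ j, ∑ i, (2 * (p j * ((Uᴴ * X * V) j i * (Vᴴ * U) i j).re)
      - (q i + t * p j) * Complex.normSq ((Uᴴ * X * V) j i)) := by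
  have e1 : Uᴴ * X * U = (Uᴴ * X * V) * (Vᴴ * U) := by
    rw [Matrix.mul_assoc (Uᴴ * X), ← Matrix.mul_assoc V, hV, Matrix.one_mul]
  have e2 : Vᴴ * (Xᴴ * X) * V = (Uᴴ * X * V)ᴴ * (Uᴴ * X * V) := by
    simp only [Matrix.conjTranspose_mul, Matrix.conjTranspose_conjTranspose, Matrix.mul_assoc]
    rw [← Matrix.mul_assoc U, hU, Matrix.one_mul]
  have e3 : Uᴴ * (X * Xᴴ) * U = (Uᴴ * X * V) * (Uᴴ * X * V)ᴴ := by
    simp only [Matrix.conjTranspose_mul, Matrix.conjTranspose_conjTranspose, Matrix.mul_assoc]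
    rw [← Matrix.mul_assoc V, hV, Matrix.one_mul]
  unfold Jfun
  rw [hρ, hσ, trace_cyc, trace_cyc, trace_cyc, e1, e2, e3, trace_diag_mul, trace_diag_mul, trace_diag_mul]
  rw [Finset.sum_comm (s := (Finset.univ : Finset l)) (t := (Finset.univ : Finset k))]
  simp only [Finset.mul_sum, ← Finset.sum_sub_distrib]
  refine Finset.sum_congr rfl fun j _ => Finset.sum_congr rfl fun i _ => ?_
  simp only [Matrix.conjTranspose_apply, Complex.star_def]
  rw [mul_comm ((starRingEnd ℂ) _), Complex.mul_conj, Complex.ofReal_re]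
  ring

lemma quad_le {p q t : ℝ} (hp : 0 ≤ p) (hq : 0 ≤ q) (ht : 0 < t) (y c : ℂ) :
    2 * (p * (y * c).re) - (q + t * p) * Complex.normSq y ≤
      Complex.normSq c * p ^ 2 / (q + t * p) := by
  rcases hp.eq_or_lt with h | h
  · subst h
    simp
    exact mul_nonneg hq (Complex.normSq_nonneg _)
  · have hD : 0 < q + t * p := by positivity
    rw [le_div_iff₀ hD]
    simp only [Complex.normSq_apply, Complex.mul_re]
    nlinarith [sq_nonneg ((q + t * p) * y.re - p * c.re), sq_nonneg ((q + t * p) * y.im + p * c.im)]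

lemma quad_eq {p q t : ℝ} (hp : 0 ≤ p) (hq : 0 ≤ q) (ht : 0 < t) (c : ℂ) :
    2 * (p * (((p / (q + t * p) : ℝ) * star c) * c).re)
      - (q + t * p) * Complex.normSq ((p / (q + t * p) : ℝ) * star c) =
      Complex.normSq c * p ^ 2 / (q + t * p) := by
  rcases hp.eq_or_lt with h | h
  · subst h
    simp
  · have hD : 0 < q + t * p := by positivity
    rw [mul_assoc, Complex.re_ofReal_mul, Complex.normSq_mul, Complex.normSq_ofReal,
      Complex.star_def, Complex.normSq_conj, mul_comm _ c, Complex.mul_conj, Complex.ofReal_re]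
    field_simp
    ring

lemma resolvent_mono {m k l m' k' l' : Type*} [Fintype m] [Fintype k] [Fintype l]
    [Fintype m'] [Fintype k'] [Fintype l']
    [DecidableEq m] [DecidableEq k] [DecidableEq l]
    [DecidableEq m'] [DecidableEq k'] [DecidableEq l']
    (U : Matrix m k ℂ) (V : Matrix m l ℂ) (p : k → ℝ) (q : l → ℝ)
    (hp : ∀ i, 0 ≤ p i) (hq : ∀ i, 0 ≤ q i)
    (hU : U * Uᴴ = 1) (hV : V * Vᴴ = 1) (ρ σ : Matrix m m ℂ)
    (hρ : ρ = U * diagonal (fun i => (p i : ℂ)) * Uᴴ)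
    (hσ : σ = V * diagonal (fun i => (q i : ℂ)) * Vᴴ)
    (U' : Matrix m' k' ℂ) (V' : Matrix m' l' ℂ) (p' : k' → ℝ) (q' : l' → ℝ)
    (hp' : ∀ i, 0 ≤ p' i) (hq' : ∀ i, 0 ≤ q' i)
    (hU' : U' * U'ᴴ = 1) (hV' : V' * V'ᴴ = 1) (hU2 : U'ᴴ * U' = 1) (hV2 : V'ᴴ * V' = 1)
    (ρ' σ' : Matrix m' m' ℂ)
    (hρ' : ρ' = U' * diagonal (fun i => (p' i : ℂ)) * U'ᴴ)
    (hσ' : σ' = V' * diagonal (fun i => (q' i : ℂ)) * V'ᴴ)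
    (hJ : ∀ X' : Matrix m' m' ℂ, ∃ X : Matrix m m ℂ, ∀ t, Jfun ρ σ t X = Jfun ρ' σ' t X')
    (t : ℝ) (ht : 0 < t) :
    ∑ j, ∑ i, Complex.normSq ((V'ᴴ * U') i j) * p' j ^ 2 / (q' i + t * p' j) ≤
    ∑ j, ∑ i, Complex.normSq ((Vᴴ * U) i j) * p j ^ 2 / (q i + t * p j) := by
  let Y : Matrix k' l' ℂ := fun j i => ((p' j / (q' i + t * p' j) : ℝ) : ℂ) * star ((V'ᴴ * U') i j)
  obtain ⟨X, hX⟩ := hJ (U' * Y * V'ᴴ)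
  have hY : U'ᴴ * (U' * Y * V'ᴴ) * V' = Y := by
    calc U'ᴴ * (U' * Y * V'ᴴ) * V' = (U'ᴴ * U') * Y * (V'ᴴ * V') := by
          simp only [Matrix.mul_assoc]
      _ = Y := by rw [hU2, hV2, Matrix.one_mul, Matrix.mul_one]
  have h1 := Jfun_eq U' V' p' q' hU' hV' ρ' σ' hρ' hσ' t (U' * Y * V'ᴴ)
  rw [hY] at h1
  have h2 := Jfun_eq U V p q hU hV ρ σ hρ hσ t X
  have h3 : Jfun ρ' σ' t (U' * Y * V'ᴴ) =
      ∑ j, ∑ i, Complex.normSq ((V'ᴴ * U') i j) * p' j ^ 2 / (q' i + t * p' j) := by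
    rw [h1]
    exact Finset.sum_congr rfl fun j _ => Finset.sum_congr rfl fun i _ =>
      quad_eq (hp' j) (hq' i) ht _
  rw [← h3, ← hX t, h2]
  exact Finset.sum_le_sum fun j _ => Finset.sum_le_sum fun i _ => quad_le (hp j) (hq i) ht _ _

/-! ### Strong subadditivity -/

section SSA

set_option linter.unusedSectionVars false

variable {A B C E : Type*} [Fintype A] [Fintype B] [Fintype C] [Fintype E]

lemma one_kron_unitary_left [DecidableEq A] [DecidableEq C] {v : Matrix C C ℂ} (hv : vᴴ * v = 1) :
    ((1 : Matrix A A ℂ) ⊗ₖ v)ᴴ * ((1 : Matrix A A ℂ) ⊗ₖ v) = 1 := by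
  rw [Matrix.conjTranspose_kronecker, ← Matrix.mul_kronecker_mul, hv]
  simp

lemma one_kron_unitary_right [DecidableEq A] [DecidableEq C] {v : Matrix C C ℂ} (hv : v * vᴴ = 1) :
    ((1 : Matrix A A ℂ) ⊗ₖ v) * ((1 : Matrix A A ℂ) ⊗ₖ v)ᴴ = 1 := by
  rw [Matrix.conjTranspose_kronecker, ← Matrix.mul_kronecker_mul, hv]
  simp

lemma one_kron_diag [DecidableEq A] [DecidableEq C] {v τ : Matrix C C ℂ} {q : C → ℝ}
    (h : τ = v * diagonal (fun i => (q i : ℂ)) * vᴴ) :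
    (1 : Matrix A A ℂ) ⊗ₖ τ = ((1 : Matrix A A ℂ) ⊗ₖ v) *
      diagonal (fun x : A × C => (q x.2 : ℂ)) * ((1 : Matrix A A ℂ) ⊗ₖ v)ᴴ := by
  have : diagonal (fun x : A × C => (q x.2 : ℂ)) =
      (1 : Matrix A A ℂ) ⊗ₖ diagonal (fun i => (q i : ℂ)) := by
    rw [← Matrix.diagonal_one, Matrix.diagonal_kronecker_diagonal]
    simp
  rw [this, Matrix.conjTranspose_kronecker, ← Matrix.mul_kronecker_mul,
    ← Matrix.mul_kronecker_mul, h]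
  simp

lemma ptraceL_conj [DecidableEq A] (ρ : Matrix (A × C) (A × C) ℂ) (v : Matrix C C ℂ) :
    ptraceL (((1 : Matrix A A ℂ) ⊗ₖ v)ᴴ * ρ * ((1 : Matrix A A ℂ) ⊗ₖ v)) =
      vᴴ * ptraceL ρ * v := by
  ext i j
  simp only [ptraceL, Matrix.mul_apply, Matrix.conjTranspose_apply, Matrix.kroneckerMap_apply,
    Fintype.sum_prod_type, Matrix.one_apply, ite_mul, one_mul, zero_mul, mul_ite, mul_zero,
    apply_ite star, star_zero, Finset.sum_ite_irrel, Finset.sum_const_zero,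
    Finset.sum_ite_eq', Finset.mem_univ, if_true]
  rw [Finset.sum_comm]
  refine Finset.sum_congr rfl fun c _ => ?_
  rw [← Finset.sum_mul, Finset.sum_comm]
  simp only [Finset.mul_sum]

lemma diag_conj_entry {x k m : Type*} [Fintype m] [Fintype k] [DecidableEq k] [Fintype x]
    (W : Matrix m x ℂ) (U : Matrix m k ℂ) (p : k → ℝ) (i : x) :
    (Wᴴ * (U * diagonal (fun i => (p i : ℂ)) * Uᴴ) * W) i i =
      ((∑ j, Complex.normSq ((Wᴴ * U) i j) * p j : ℝ) : ℂ) := by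
  have : Wᴴ * (U * diagonal (fun i => (p i : ℂ)) * Uᴴ) * W =
      (Wᴴ * U) * diagonal (fun i => (p i : ℂ)) * (Wᴴ * U)ᴴ := by
    simp only [Matrix.conjTranspose_mul, Matrix.conjTranspose_conjTranspose, Matrix.mul_assoc]
  rw [this]
  generalize Wᴴ * U = Z
  rw [Matrix.mul_apply]
  push_cast
  refine Finset.sum_congr rfl fun j _ => ?_
  rw [Matrix.mul_diagonal, Matrix.conjTranspose_apply, Complex.star_def, mul_right_comm,
    Complex.mul_conj]

/-- The row sums in the conditional setting. -/
lemma cond_row [DecidableEq A] [DecidableEq C] {ρ : Matrix (A × C) (A × C) ℂ}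
    {U : Matrix (A × C) (A × C) ℂ} {p : A × C → ℝ} {v : Matrix C C ℂ} {q : C → ℝ}
    (hv : vᴴ * v = 1)
    (hρ : ρ = U * diagonal (fun i => (p i : ℂ)) * Uᴴ)
    (hτ : ptraceL ρ = v * diagonal (fun i => (q i : ℂ)) * vᴴ) (i : C) :
    ∑ a, ∑ j, Complex.normSq ((((1 : Matrix A A ℂ) ⊗ₖ v)ᴴ * U) (a, i) j) * p j = q i := by
  have h1 := congrFun (congrFun (ptraceL_conj ρ v) i) i
  have h2 : vᴴ * ptraceL ρ * v = diagonal (fun i => (q i : ℂ)) := by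
    rw [hτ]
    calc vᴴ * (v * diagonal (fun i => (q i : ℂ)) * vᴴ) * v
        = (vᴴ * v) * diagonal (fun i => (q i : ℂ)) * (vᴴ * v) := by simp only [Matrix.mul_assoc]
      _ = _ := by rw [hv, Matrix.one_mul, Matrix.mul_one]
  rw [h2, Matrix.diagonal_apply_eq, ptraceL] at h1
  have h3 : ∀ a : A, _ := fun a => diag_conj_entry ((1 : Matrix A A ℂ) ⊗ₖ v) U p (a, i)
  rw [← hρ] at h3
  simp only [h3] at h1
  exact_mod_cast h1

lemma cond_col {m k l : Type*} [Fintype m] [Fintype k] [Fintype l] [DecidableEq m] [DecidableEq k]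
    {U : Matrix m k ℂ} {V : Matrix m l ℂ} (hU : Uᴴ * U = 1) (hV : V * Vᴴ = 1) (j : k) :
    ∑ i, Complex.normSq ((Vᴴ * U) i j) = 1 := by
  have h : (Vᴴ * U)ᴴ * (Vᴴ * U) = 1 := by
    rw [Matrix.conjTranspose_mul, Matrix.conjTranspose_conjTranspose]
    calc Uᴴ * V * (Vᴴ * U) = Uᴴ * (V * Vᴴ) * U := by simp only [Matrix.mul_assoc]
      _ = 1 := by rw [hV, Matrix.mul_one, hU]
  have h1 := congrFun (congrFun h j) j
  rw [Matrix.mul_apply, Matrix.one_apply_eq] at h1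
  have h2 : ∀ i, (Vᴴ * U)ᴴ j i * (Vᴴ * U) i j = (Complex.normSq ((Vᴴ * U) i j) : ℂ) := by
    intro i
    rw [Matrix.conjTranspose_apply, Complex.star_def, mul_comm, Complex.mul_conj]
  simp only [h2] at h1
  exact_mod_cast h1

/-- Lift of an operator on `AE` to `ABE`. -/
def liftAE (B : Type*) (X : Matrix (A × E) (A × E) ℂ) : Matrix (A × B × E) (A × B × E) ℂ :=
  fun x y => if x.2.1 = y.2.1 then X (x.1, x.2.2) (y.1, y.2.2) else 0

lemma liftAE_conj (X : Matrix (A × E) (A × E) ℂ) : (liftAE B X)ᴴ = liftAE B Xᴴ := by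
  ext x y
  simp only [liftAE, Matrix.conjTranspose_apply, apply_ite star, star_zero, eq_comm]

lemma liftAE_mul (X Y : Matrix (A × E) (A × E) ℂ) :
    liftAE B X * liftAE B Y = liftAE B (X * Y) := by
  ext ⟨a, b, e⟩ ⟨a', b', e'⟩
  simp only [liftAE, Matrix.mul_apply, Fintype.sum_prod_type, ite_mul, mul_ite, zero_mul, mul_zero]
  by_cases h : b = b'
  · subst h
    simp [Finset.sum_ite_irrel]
  · simp [Finset.sum_ite_irrel, h]

lemma trace_liftAE (ρ : Matrix (A × B × E) (A × B × E) ℂ) (X : Matrix (A × E) (A × E) ℂ) :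
    (ρ * liftAE B X).trace = (margAE ρ * X).trace := by
  simp only [liftAE, margAE, Matrix.trace, Matrix.diag, Matrix.mul_apply, Fintype.sum_prod_type,
    mul_ite, mul_zero, Finset.sum_ite_irrel, Finset.sum_const_zero, Finset.sum_ite_eq',
    Finset.mem_univ, if_true, Finset.sum_mul]
  refine Finset.sum_congr rfl fun a _ => ?_
  rw [Finset.sum_comm]
  refine Finset.sum_congr rfl fun e _ => ?_
  rw [Finset.sum_comm]
  refine Finset.sum_congr rfl fun a' _ => ?_
  exact Finset.sum_comm

lemma margAE_psd {ρ : Matrix (A × B × E) (A × B × E) ℂ} (h : ρ.PosSemidef) :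
    (margAE ρ).PosSemidef := by
  have : margAE ρ = ∑ b, ρ.submatrix (fun x : A × E => (x.1, b, x.2)) (fun x => (x.1, b, x.2)) := by
    ext x y; simp [margAE, Matrix.sum_apply]
  rw [this]
  exact Matrix.posSemidef_sum _ fun b _ => h.submatrix _

lemma ptraceL_psd {ρ : Matrix (A × C) (A × C) ℂ} (h : ρ.PosSemidef) :
    (ptraceL ρ).PosSemidef := by
  have : ptraceL ρ = ∑ a, ρ.submatrix (fun x : C => (a, x)) (fun x => (a, x)) := by
    ext x y; simp [ptraceL, Matrix.sum_apply]
  rw [this]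
  exact Matrix.posSemidef_sum _ fun b _ => h.submatrix _

lemma margBE_psd {ρ : Matrix (A × B × E) (A × B × E) ℂ} (h : ρ.PosSemidef) :
    (margBE ρ).PosSemidef := ptraceL_psd h

lemma margE_psd {ρ : Matrix (A × B × E) (A × B × E) ℂ} (h : ρ.PosSemidef) :
    (margE ρ).PosSemidef := ptraceL_psd (margAE_psd h)


lemma margAE_kron [DecidableEq A] (ρ : Matrix (B × E) (B × E) ℂ) :
    margAE ((1 : Matrix A A ℂ) ⊗ₖ ρ) = (1 : Matrix A A ℂ) ⊗ₖ ptraceL ρ := by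
  ext x y
  simp [margAE, ptraceL, Matrix.kroneckerMap_apply, Finset.mul_sum]

lemma Jfun_lift (ρ σ : Matrix (A × B × E) (A × B × E) ℂ) (t : ℝ) (X : Matrix (A × E) (A × E) ℂ) :
    Jfun ρ σ t (liftAE B X) = Jfun (margAE ρ) (margAE σ) t X := by
  simp only [Jfun, liftAE_conj, liftAE_mul, trace_liftAE]

lemma trace_diag_conj {m k : Type*} [Fintype m] [Fintype k] [DecidableEq k]
    {U : Matrix m k ℂ} {p : k → ℝ} (hU : Uᴴ * U = 1) :
    (U * diagonal (fun i => (p i : ℂ)) * Uᴴ).trace = ((∑ i, p i : ℝ) : ℂ) := by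
  rw [Matrix.trace_mul_comm, ← Matrix.mul_assoc, hU, Matrix.one_mul, Matrix.trace_diagonal]
  push_cast
  rfl

/-- Support condition in the conditional setting. -/
lemma cond_supp [DecidableEq A] [DecidableEq C] {ρ : Matrix (A × C) (A × C) ℂ}
    {U : Matrix (A × C) (A × C) ℂ} {p : A × C → ℝ} {v : Matrix C C ℂ} {q : C → ℝ}
    (hp : ∀ i, 0 ≤ p i) (hq : ∀ i, 0 ≤ q i) (hv : vᴴ * v = 1)
    (hρ : ρ = U * diagonal (fun i => (p i : ℂ)) * Uᴴ)
    (hτ : ptraceL ρ = v * diagonal (fun i => (q i : ℂ)) * vᴴ) (x j : A × C)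
    (h : Complex.normSq ((((1 : Matrix A A ℂ) ⊗ₖ v)ᴴ * U) x j) * p j ≠ 0) : 0 < q x.2 := by
  refine lt_of_le_of_ne (hq _) fun h0 => h ?_
  have h1 := cond_row hv hρ hτ x.2
  rw [← h0] at h1
  have hn : ∀ a j, 0 ≤ Complex.normSq ((((1 : Matrix A A ℂ) ⊗ₖ v)ᴴ * U) (a, x.2) j) * p j :=
    fun a j => mul_nonneg (Complex.normSq_nonneg _) (hp j)
  rw [Finset.sum_eq_zero_iff_of_nonneg (fun a _ => Finset.sum_nonneg fun j _ => hn a j)] at h1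
  have h2 := h1 x.1 (Finset.mem_univ _)
  rw [Finset.sum_eq_zero_iff_of_nonneg (fun j _ => hn _ j)] at h2
  exact h2 j (Finset.mem_univ _)

/-- The relative entropy value in the conditional setting. -/
lemma cond_value [DecidableEq A] [DecidableEq C] {ρ : Matrix (A × C) (A × C) ℂ}
    {U : Matrix (A × C) (A × C) ℂ} {p : A × C → ℝ} {v : Matrix C C ℂ} {q : C → ℝ}
    (hU : Uᴴ * U = 1) (hv : vᴴ * v = 1) (hv2 : v * vᴴ = 1)
    (hρ : ρ = U * diagonal (fun i => (p i : ℂ)) * Uᴴ)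
    (hτ : ptraceL ρ = v * diagonal (fun i => (q i : ℂ)) * vᴴ) :
    ∑ z : (A × C) × (A × C), Complex.normSq ((((1 : Matrix A A ℂ) ⊗ₖ v)ᴴ * U) z.2 z.1) * p z.1 *
      (Real.log (p z.1) - Real.log (q z.2.2)) =
    Real.log 2 * (vonNeumannEntropy (ptraceL ρ) - vonNeumannEntropy ρ) := by
  have hl : Real.log 2 ≠ 0 := by
    have := Real.log_pos (x := 2) (by norm_num)
    exact this.ne'
  rw [entropy_of_diag U p hU hρ, entropy_of_diag v q hv hτ]
  simp only [Real.logb]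
  rw [mul_sub, Finset.mul_sum, Finset.mul_sum]
  simp only [mul_sub, Finset.sum_sub_distrib]
  have e1 : ∑ z : (A × C) × (A × C),
      Complex.normSq ((((1 : Matrix A A ℂ) ⊗ₖ v)ᴴ * U) z.2 z.1) * p z.1 * Real.log (p z.1) =
      ∑ j, p j * Real.log (p j) := by
    rw [Fintype.sum_prod_type]
    refine Finset.sum_congr rfl fun j _ => ?_
    simp only [mul_assoc]
    rw [← Finset.sum_mul, cond_col hU (one_kron_unitary_right hv2), one_mul]
  have e2 : ∑ z : (A × C) × (A × C),
      Complex.normSq ((((1 : Matrix A A ℂ) ⊗ₖ v)ᴴ * U) z.2 z.1) * p z.1 * Real.log (q z.2.2) =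
      ∑ i, q i * Real.log (q i) := by
    rw [Fintype.sum_prod_type_right, Fintype.sum_prod_type_right]
    refine Finset.sum_congr rfl fun i _ => ?_
    dsimp only
    simp only [← Finset.sum_mul]
    rw [cond_row hv hρ hτ]
  rw [e1, e2]
  have e3 : ∀ x : ℝ, Real.log 2 * -(x * (Real.log x / Real.log 2)) = -(x * Real.log x) := by
    intro x; field_simp
  simp only [e3, Finset.sum_neg_distrib]
  ring

theorem strong_subadditivity {ρ : Matrix (A × B × E) (A × B × E) ℂ} (h : ρ.PosSemidef) :
    0 ≤ condMutualInfo ρ := by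
  obtain ⟨U, p, hp, hU, hU2, hρ⟩ := exists_diag h
  obtain ⟨v, q, hq, hv, hv2, hτ⟩ := exists_diag (ptraceL_psd h)
  obtain ⟨U', p', hp', hU', hU2', hρ'⟩ := exists_diag (margAE_psd h)
  obtain ⟨v', q', hq', hv', hv2', hτ'⟩ := exists_diag (ptraceL_psd (margAE_psd h))
  have hJ : ∀ X' : Matrix (A × E) (A × E) ℂ, ∃ X : Matrix (A × B × E) (A × B × E) ℂ, ∀ t,
      Jfun ρ ((1 : Matrix A A ℂ) ⊗ₖ ptraceL ρ) t X =
      Jfun (margAE ρ) ((1 : Matrix A A ℂ) ⊗ₖ ptraceL (margAE ρ)) t X' := by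
    intro X'
    refine ⟨liftAE B X', fun t => ?_⟩
    rw [Jfun_lift, margAE_kron]
    congr 2
    ext e e'
    simp only [ptraceL, margAE]
    exact Finset.sum_comm
  have hres := resolvent_mono U ((1 : Matrix A A ℂ) ⊗ₖ v) p (fun x => q x.2) hp (fun x => hq x.2)
    hU2 (one_kron_unitary_right hv2) ρ _ hρ (one_kron_diag hτ)
    U' ((1 : Matrix A A ℂ) ⊗ₖ v') p' (fun x => q' x.2) hp' (fun x => hq' x.2)
    hU2' (one_kron_unitary_right hv2') hU' (one_kron_unitary_left hv') _ _ hρ'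
    (one_kron_diag hτ') hJ
  have htr : ∑ i, p i = ∑ i, p' i := by
    have h1 : ρ.trace = (margAE ρ).trace := by
      simp only [Matrix.trace, Matrix.diag, margAE, Fintype.sum_prod_type]
      exact Finset.sum_congr rfl fun a _ => Finset.sum_comm
    have h2 := trace_diag_conj (p := p) hU
    have h3 := trace_diag_conj (p := p') hU'
    rw [← hρ] at h2
    rw [← hρ'] at h3
    rw [h2, h3] at h1
    exact_mod_cast h1
  have key := scalar_mono
    (fun z : (A × B × E) × (A × B × E) =>
      Complex.normSq ((((1 : Matrix A A ℂ) ⊗ₖ v)ᴴ * U) z.2 z.1))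
    (fun z => p z.1) (fun z => q z.2.2)
    (fun z : (A × E) × (A × E) =>
      Complex.normSq ((((1 : Matrix A A ℂ) ⊗ₖ v')ᴴ * U') z.2 z.1))
    (fun z => p' z.1) (fun z => q' z.2.2)
    (fun z => hp _) (fun z => hq _) (fun z => hp' _) (fun z => hq' _)
    (fun z hz => cond_supp hp hq hv hρ hτ _ _ hz)
    (fun z hz => cond_supp hp' hq' hv' hρ' hτ' _ _ hz)
    (by
      rw [Fintype.sum_prod_type (α₁ := A × B × E), Fintype.sum_prod_type (α₁ := A × E)]
      simp only [← Finset.sum_mul, cond_col hU (one_kron_unitary_right hv2),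
        cond_col hU' (one_kron_unitary_right hv2'), one_mul, htr])
    (by
      intro t ht
      rw [Fintype.sum_prod_type (α₁ := A × B × E), Fintype.sum_prod_type (α₁ := A × E)]
      exact hres t ht)
  rw [cond_value hU hv hv2 hρ hτ, cond_value hU' hv' hv2' hρ' hτ'] at key
  have hl : 0 < Real.log 2 := Real.log_pos (by norm_num)
  have := le_of_mul_le_mul_left key hl
  have e1 : ptraceL ρ = margBE ρ := rfl
  have e2 : ptraceL (margAE ρ) = margE ρ := rfl
  rw [e1, e2] at this
  unfold condMutualInfo
  linarith

end SSA

/-! ### Superadditivity -/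

section Super

set_option linter.unusedSectionVars false

lemma psd_sum_sub {m n k : Type*} [Fintype k] {ρ : Matrix n n ℂ} (h : ρ.PosSemidef)
    (f : k → m → n) : Matrix.PosSemidef (fun x y => ∑ c, ρ (f c x) (f c y) : Matrix m m ℂ) := by
  have : (fun x y => ∑ c, ρ (f c x) (f c y) : Matrix m m ℂ) = ∑ c, ρ.submatrix (f c) (f c) := by
    ext x y; simp [Matrix.sum_apply]
  rw [this]
  exact Matrix.posSemidef_sum _ fun b _ => h.submatrix _

lemma entropy_congr {m n : Type*} [Fintype m] [Fintype n] {M : Matrix m m ℂ} {N : Matrix n n ℂ}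
    (h : N.PosSemidef) (e : m ≃ n) (he : ∀ x y, M x y = N (e x) (e y)) :
    vonNeumannEntropy M = vonNeumannEntropy N := by
  have : M = N.submatrix e e := by ext x y; exact he x y
  rw [this, entropy_submatrix h.1]

variable {A B E A' B' E' : Type*} [Fintype A] [Fintype B] [Fintype E]
  [Fintype A'] [Fintype B'] [Fintype E']

lemma condMutualInfo_reindex {ρ : Matrix (A × B × E) (A × B × E) ℂ} (h : ρ.PosSemidef)
    (eA : A' ≃ A) (eB : B' ≃ B) (eE : E' ≃ E) :
    condMutualInfo (ρ.submatrix (eA.prodCongr (eB.prodCongr eE)) (eA.prodCongr (eB.prodCongr eE))) =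
      condMutualInfo ρ := by
  unfold condMutualInfo
  rw [entropy_submatrix h.1, entropy_congr (margAE_psd h) (eA.prodCongr eE),
    entropy_congr (margBE_psd h) (eB.prodCongr eE), entropy_congr (margE_psd h) eE]
  · intro x y
    simp only [margE, Matrix.submatrix_apply, Equiv.prodCongr_apply, Prod.map]
    rw [Equiv.sum_comp eA (fun a => ∑ b, ρ (a, eB b, eE x) (a, eB b, eE y))]
    exact Finset.sum_congr rfl fun a _ =>
      Equiv.sum_comp eB (fun b => ρ (a, b, eE x) (a, b, eE y))
  · intro x y
    simp only [margBE, Matrix.submatrix_apply, Equiv.prodCongr_apply, Prod.map]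
    exact Equiv.sum_comp eA (fun a => ρ (a, eB x.1, eE x.2) (a, eB y.1, eE y.2))
  · intro x y
    simp only [margAE, Matrix.submatrix_apply, Equiv.prodCongr_apply, Prod.map]
    exact Equiv.sum_comp eB (fun b => ρ (eA x.1, b, eE x.2) (eA y.1, b, eE y.2))

lemma isState_submatrix {m n : Type*} [Fintype m] [Fintype n] {ρ : Matrix n n ℂ} (h : IsState ρ)
    (e : m ≃ n) : IsState (ρ.submatrix e e) := by
  refine ⟨h.1.submatrix _, ?_⟩
  rw [← h.2]
  exact Equiv.sum_comp e (fun i => ρ i i)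

lemma Esq_le {ρ : Matrix (A × B) (A × B) ℂ} (τ : Matrix (A × B × E) (A × B × E) ℂ)
    (hτ : IsState τ) (hm : margAB τ = ρ) : Esq ρ ≤ (1 / 2) * condMutualInfo τ := by
  refine csInf_le ⟨0, ?_⟩ ?_
  · rintro x ⟨d, ρE, h1, -, rfl⟩
    have := strong_subadditivity h1.1
    linarith
  · have e := (Fintype.equivFin E).symm
    refine ⟨Fintype.card E, τ.submatrix ((Equiv.refl A).prodCongr ((Equiv.refl B).prodCongr e))
      ((Equiv.refl A).prodCongr ((Equiv.refl B).prodCongr e)), isState_submatrix hτ _, ?_, ?_⟩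
    · rw [← hm]
      ext x y
      exact Equiv.sum_comp e (fun i => τ (x.1, x.2, i) (y.1, y.2, i))
    · rw [condMutualInfo_reindex hτ.1]

/-- The marginal on the first parts. -/
def tau1 (τ : Matrix ((A × A') × (B × B') × E) ((A × A') × (B × B') × E) ℂ) :
    Matrix (A × B × E) (A × B × E) ℂ :=
  fun x y => ∑ c : A' × B', τ ((x.1, c.1), (x.2.1, c.2), x.2.2) ((y.1, c.1), (y.2.1, c.2), y.2.2)

/-- The same state, with the first parts moved to the extension. -/
def tau2 (τ : Matrix ((A × A') × (B × B') × E) ((A × A') × (B × B') × E) ℂ) :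
    Matrix (A' × B' × (E × A × B)) (A' × B' × (E × A × B)) ℂ :=
  fun x y => τ ((x.2.2.2.1, x.1), (x.2.2.2.2, x.2.1), x.2.2.1)
    ((y.2.2.2.1, y.1), (y.2.2.2.2, y.2.1), y.2.2.1)

/-- Marginal without the last factor. -/
def tau3 (τ : Matrix ((A × A') × (B × B') × E) ((A × A') × (B × B') × E) ℂ) :
    Matrix (A' × B × (A × E)) (A' × B × (A × E)) ℂ :=
  fun x y => ∑ c : B', τ ((x.2.2.1, x.1), (x.2.1, c), x.2.2.2) ((y.2.2.1, y.1), (y.2.1, c), y.2.2.2)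

/-- Marginal without the second factor. -/
def tau4 (τ : Matrix ((A × A') × (B × B') × E) ((A × A') × (B × B') × E) ℂ) :
    Matrix (B' × A × (B × E)) (B' × A × (B × E)) ℂ :=
  fun x y => ∑ c : A', τ ((x.2.1, c), (x.2.2.1, x.1), x.2.2.2) ((y.2.1, c), (y.2.2.1, y.1), y.2.2.2)

lemma superadd {τ : Matrix ((A × A') × (B × B') × E) ((A × A') × (B × B') × E) ℂ}
    (h : τ.PosSemidef) :
    condMutualInfo (tau1 τ) + condMutualInfo (tau2 τ) ≤ condMutualInfo τ := by
  have h1 : (tau1 τ).PosSemidef := psd_sum_sub h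
    (fun (c : A' × B') (x : A × B × E) => ((x.1, c.1), (x.2.1, c.2), x.2.2))
  have h2 : (tau2 τ).PosSemidef := h.submatrix
    (fun x : A' × B' × (E × A × B) => ((x.2.2.2.1, x.1), (x.2.2.2.2, x.2.1), x.2.2.1))
  have h3 : (tau3 τ).PosSemidef := psd_sum_sub h
    (fun (c : B') (x : A' × B × (A × E)) => ((x.2.2.1, x.1), (x.2.1, c), x.2.2.2))
  have h4 : (tau4 τ).PosSemidef := psd_sum_sub h
    (fun (c : A') (x : B' × A × (B × E)) => ((x.2.1, c), (x.2.2.1, x.1), x.2.2.2))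
  have s3 := strong_subadditivity h3
  have s4 := strong_subadditivity h4
  unfold condMutualInfo at *
  have a1 : vonNeumannEntropy (margAE (tau3 τ)) = vonNeumannEntropy (margAE τ) := by
    refine entropy_congr (margAE_psd h)
      ⟨fun x => ((x.2.1, x.1), x.2.2), fun y => (y.1.2, (y.1.1, y.2)), fun _ => rfl, fun _ => rfl⟩ ?_
    intro x y
    simp [margAE, tau3, Fintype.sum_prod_type]
  have a2 : vonNeumannEntropy (margBE (tau3 τ)) = vonNeumannEntropy (tau1 τ) := by
    refine entropy_congr h1
      ⟨fun x => (x.2.1, x.1, x.2.2), fun y => (y.2.1, (y.1, y.2.2)), fun _ => rfl, fun _ => rfl⟩ ?_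
    intro x y
    simp [margBE, tau3, tau1, Fintype.sum_prod_type]
  have a3 : vonNeumannEntropy (margAE (tau2 τ)) = vonNeumannEntropy (tau3 τ) := by
    refine entropy_congr h3
      ⟨fun x => (x.1, x.2.2.2, (x.2.2.1, x.2.1)), fun y => (y.1, (y.2.2.2, y.2.2.1, y.2.1)),
        fun _ => rfl, fun _ => rfl⟩ ?_
    intro x y
    simp [margAE, tau3, tau2]
  have a4 : vonNeumannEntropy (margE (tau3 τ)) = vonNeumannEntropy (margAE (tau1 τ)) := by
    congr 1
    ext x y
    simp only [margE, margAE, tau3, tau1, Fintype.sum_prod_type]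
    exact Finset.sum_comm
  have b1 : vonNeumannEntropy (margAE (tau4 τ)) = vonNeumannEntropy (margBE τ) := by
    refine entropy_congr (margBE_psd h)
      ⟨fun x => ((x.2.1, x.1), x.2.2), fun y => (y.1.2, (y.1.1, y.2)), fun _ => rfl, fun _ => rfl⟩ ?_
    intro x y
    simp [margAE, margBE, tau4, Fintype.sum_prod_type]
  have b2 : vonNeumannEntropy (margBE (tau4 τ)) = vonNeumannEntropy (tau1 τ) := by
    congr 1
    ext x y
    simp only [margBE, tau4, tau1, Fintype.sum_prod_type]
    exact Finset.sum_comm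
  have b3 : vonNeumannEntropy (margBE (tau2 τ)) = vonNeumannEntropy (tau4 τ) := by
    refine entropy_congr h4
      ⟨fun x => (x.1, x.2.2.1, (x.2.2.2, x.2.1)), fun y => (y.1, (y.2.2.2, y.2.1, y.2.2.1)),
        fun _ => rfl, fun _ => rfl⟩ ?_
    intro x y
    simp [margBE, tau4, tau2]
  have b4 : vonNeumannEntropy (margE (tau4 τ)) = vonNeumannEntropy (margBE (tau1 τ)) := by
    congr 1
    ext x y
    simp only [margE, margBE, tau4, tau1, Fintype.sum_prod_type]
    rw [Finset.sum_comm]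
    exact Finset.sum_congr rfl fun _ _ => Finset.sum_comm
  have c1 : vonNeumannEntropy (tau2 τ) = vonNeumannEntropy τ := by
    refine entropy_congr h
      ⟨fun x => ((x.2.2.2.1, x.1), (x.2.2.2.2, x.2.1), x.2.2.1),
        fun y => (y.1.2, y.2.1.2, (y.2.2, y.1.1, y.2.1.1)), fun _ => rfl, fun _ => rfl⟩ ?_
    intro x y
    rfl
  have c2 : vonNeumannEntropy (margE (tau2 τ)) = vonNeumannEntropy (tau1 τ) := by
    refine entropy_congr h1
      ⟨fun x => (x.2.1, x.2.2, x.1), fun y => (y.2.2, y.1, y.2.1), fun _ => rfl, fun _ => rfl⟩ ?_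
    intro x y
    simp [margE, tau1, tau2, Fintype.sum_prod_type]
  have c3 : vonNeumannEntropy (margE (tau1 τ)) = vonNeumannEntropy (margE τ) := by
    congr 1
    ext x y
    simp only [margE, tau1, Fintype.sum_prod_type]
    exact Finset.sum_congr rfl fun _ _ => Finset.sum_comm
  linarith

end Super

/-! ### Tensor powers -/

section Final

set_option linter.unusedSectionVars false

variable {A B : Type*} [Fintype A] [Fintype B]

lemma tensorPow_cons (ρ : Matrix (A × B) (A × B) ℂ) (n : ℕ) (a a2 : A) (b b2 : B)
    (x x2 : Fin n → A) (y y2 : Fin n → B) :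
    tensorPow ρ (n + 1) (Fin.cons a x, Fin.cons b y) (Fin.cons a2 x2, Fin.cons b2 y2) =
      ρ (a, b) (a2, b2) * tensorPow ρ n (x, y) (x2, y2) := by
  simp [tensorPow, Fin.prod_univ_succ]

lemma sum_tensorPow {ρ : Matrix (A × B) (A × B) ℂ} (h : ρ.trace = 1) (n : ℕ) :
    ∑ x : (Fin n → A) × (Fin n → B), tensorPow ρ n x x = 1 := by
  rw [← Equiv.sum_comp (Equiv.arrowProdEquivProdArrow (Fin n) (fun _ => A) (fun _ => B))]
  have := Finset.prod_univ_sum (fun _ : Fin n => (Finset.univ : Finset (A × B)))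
    (fun _ z => ρ z z)
  have h2 : ∑ z, ρ z z = 1 := h
  rw [h2, Fintype.piFinset_univ] at this
  simpa [tensorPow, Equiv.arrowProdEquivProdArrow] using this.symm

lemma tensorPow_psd {ρ : Matrix (A × B) (A × B) ℂ} (h : ρ.PosSemidef) (n : ℕ) :
    (tensorPow ρ n).PosSemidef := by
  obtain ⟨U, p, hp, -, -, hρ⟩ := exists_diag h
  have hent : ∀ x y, ρ x y = ∑ c, (U x c * (Real.sqrt (p c) : ℂ)) *
      star (U y c * (Real.sqrt (p c) : ℂ)) := by
    intro x y
    rw [hρ, Matrix.mul_apply]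
    refine Finset.sum_congr rfl fun c _ => ?_
    rw [Matrix.mul_diagonal, Matrix.conjTranspose_apply, star_mul']
    have h1 : (p c : ℂ) = (Real.sqrt (p c) : ℂ) * (Real.sqrt (p c) : ℂ) := by
      rw [← Complex.ofReal_mul, Real.mul_self_sqrt (hp c)]
    rw [h1]
    simp only [Complex.star_def, Complex.conj_ofReal]
    ring
  have : tensorPow ρ n =
      (Matrix.of fun (x : (Fin n → A) × (Fin n → B)) (f : Fin n → A × B) =>
        ∏ i, (U (x.1 i, x.2 i) (f i) * (Real.sqrt (p (f i)) : ℂ))) *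
      (Matrix.of fun (x : (Fin n → A) × (Fin n → B)) (f : Fin n → A × B) =>
        ∏ i, (U (x.1 i, x.2 i) (f i) * (Real.sqrt (p (f i)) : ℂ)))ᴴ := by
    ext x y
    rw [Matrix.mul_apply]
    simp only [tensorPow, hent, Matrix.conjTranspose_apply, Matrix.of_apply]
    rw [Finset.prod_univ_sum, Fintype.piFinset_univ]
    refine Finset.sum_congr rfl fun f _ => ?_
    rw [Finset.prod_mul_distrib, star_prod]
  rw [this]
  exact Matrix.posSemidef_self_mul_conjTranspose _

theorem induct_bound {ρ : Matrix (A × B) (A × B) ℂ} (hρ : IsState ρ) (n : ℕ) :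
    ∀ (d : ℕ) (τ : Matrix ((Fin n → A) × (Fin n → B) × Fin d) ((Fin n → A) × (Fin n → B) × Fin d) ℂ),
      IsState τ → margAB τ = tensorPow ρ n → (n : ℝ) * Esq ρ ≤ (1 / 2) * condMutualInfo τ := by
  induction n with
  | zero =>
    intro d τ hτ _
    have := strong_subadditivity hτ.1
    simpa using this
  | succ n ih =>
    intro d τ hτ hm
    let eA := Fin.consEquiv (fun _ : Fin (n + 1) => A)
    let eB := Fin.consEquiv (fun _ : Fin (n + 1) => B)
    let e := eA.prodCongr (eB.prodCongr (Equiv.refl (Fin d)))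
    let τ' : Matrix ((A × (Fin n → A)) × (B × (Fin n → B)) × Fin d)
      ((A × (Fin n → A)) × (B × (Fin n → B)) × Fin d) ℂ := τ.submatrix e e
    have hτ' : IsState τ' := isState_submatrix hτ e
    have hI : condMutualInfo τ' = condMutualInfo τ := condMutualInfo_reindex hτ.1 eA eB _
    have hent : ∀ a a2 b b2 x x2 y y2, ∑ i : Fin d, τ' ((a, x), (b, y), i) ((a2, x2), (b2, y2), i) =
        ρ (a, b) (a2, b2) * tensorPow ρ n (x, y) (x2, y2) := by
      intro a a2 b b2 x x2 y y2
      rw [← tensorPow_cons, ← hm]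
      rfl
    have s1 : IsState (tau1 τ') := by
      refine ⟨psd_sum_sub hτ'.1 (fun (c : (Fin n → A) × (Fin n → B)) (x : A × B × Fin d) =>
        ((x.1, c.1), (x.2.1, c.2), x.2.2)), ?_⟩
      rw [← hτ'.2]
      let e1 : (A × B × Fin d) × ((Fin n → A) × (Fin n → B)) ≃
          (A × (Fin n → A)) × (B × (Fin n → B)) × Fin d :=
        ⟨fun z => ((z.1.1, z.2.1), (z.1.2.1, z.2.2), z.1.2.2),
          fun z => ((z.1.1, z.2.1.1, z.2.2), (z.1.2, z.2.1.2)), fun _ => rfl, fun _ => rfl⟩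
      have := Equiv.sum_comp e1 (fun z => τ' z z)
      rw [Fintype.sum_prod_type (α₁ := A × B × Fin d)] at this
      exact this
    have s2 : IsState (tau2 τ') := by
      let e2 : (Fin n → A) × (Fin n → B) × (Fin d × A × B) ≃
          (A × (Fin n → A)) × (B × (Fin n → B)) × Fin d :=
        ⟨fun x => ((x.2.2.2.1, x.1), (x.2.2.2.2, x.2.1), x.2.2.1),
        fun y => (y.1.2, y.2.1.2, (y.2.2, y.1.1, y.2.1.1)), fun _ => rfl, fun _ => rfl⟩
      exact isState_submatrix hτ' e2
    have m1 : margAB (tau1 τ') = ρ := by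
      ext x y
      simp only [margAB, tau1]
      rw [Finset.sum_comm]
      simp only [hent]
      rw [← Finset.mul_sum, sum_tensorPow hρ.2, mul_one]
    have m2 : margAB (tau2 τ') = tensorPow ρ n := by
      ext x y
      simp only [margAB, tau2]
      rw [Fintype.sum_prod_type_right]
      simp only [hent]
      rw [← Finset.sum_mul]
      have : ∑ z : A × B, ρ (z.1, z.2) (z.1, z.2) = 1 := hρ.2
      rw [this, one_mul]
    have b1 := Esq_le (tau1 τ') s1 m1
    let f := (Fintype.equivFin (Fin d × A × B)).symm
    let f' := (Equiv.refl (Fin n → A)).prodCongr ((Equiv.refl (Fin n → B)).prodCongr f)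
    have b2 := ih _ ((tau2 τ').submatrix f' f') (isState_submatrix s2 f') (by
      rw [← m2]
      ext x y
      exact Equiv.sum_comp f (fun i => tau2 τ' (x.1, x.2, i) (y.1, y.2, i)))
    rw [condMutualInfo_reindex s2.1] at b2
    have b3 := superadd hτ'.1
    push_cast
    linarith

/-! ### Entanglement of formation -/

lemma EoF_nonempty {ρ : Matrix (A × B) (A × B) ℂ} (hρ : IsState ρ) :
    { x : ℝ | ∃ (n : ℕ) (p : Fin n → ℝ) (ψ : Fin n → A × B → ℂ),
    (∀ k, 0 ≤ p k) ∧ (∑ k, p k) = 1 ∧ (∀ k, ∑ i, ‖ψ k i‖ ^ 2 = 1) ∧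
    (∑ k, (p k : ℂ) • outer (ψ k)) = ρ ∧
    x = ∑ k, p k * vonNeumannEntropy (ptraceR (outer (ψ k))) }.Nonempty := by
  obtain ⟨U, p, hp, hU, -, h⟩ := exists_diag hρ.1
  let e := (Fintype.equivFin (A × B)).symm
  refine ⟨_, Fintype.card (A × B), fun k => p (e k), fun k i => U i (e k), fun k => hp _, ?_, ?_, ?_,
    rfl⟩
  · rw [Equiv.sum_comp e p]
    have h2 := trace_diag_conj (p := p) hU
    rw [← h, hρ.2] at h2
    exact_mod_cast h2.symm
  · intro k
    have h1 := congrFun (congrFun hU (e k)) (e k)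
    rw [Matrix.mul_apply, Matrix.one_apply_eq] at h1
    have h2 : ∀ i, Uᴴ (e k) i * U i (e k) = ((‖U i (e k)‖ ^ 2 : ℝ) : ℂ) := by
      intro i
      rw [Matrix.conjTranspose_apply, Complex.star_def, mul_comm, Complex.mul_conj,
        Complex.normSq_eq_norm_sq]
    simp only [h2] at h1
    exact_mod_cast h1
  · rw [h]
    rw [Equiv.sum_comp e (fun k => (p k : ℂ) • outer (fun i => U i k))]
    ext x y
    rw [Matrix.mul_apply, Matrix.sum_apply]
    refine Finset.sum_congr rfl fun c _ => ?_
    rw [Matrix.mul_diagonal, Matrix.conjTranspose_apply]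
    simp only [outer, Matrix.smul_apply, Matrix.vecMulVec_apply, Pi.star_apply, smul_eq_mul]
    ring

lemma eta_mul (p d : ℝ) : -((p * d) * Real.logb 2 (p * d)) =
    d * -(p * Real.logb 2 p) + p * -(d * Real.logb 2 d) := by
  by_cases hp : p = 0
  · simp [hp]
  by_cases hd : d = 0
  · simp [hd]
  rw [Real.logb_mul hp hd]
  ring

/-- Entropy of a block diagonal state. -/
lemma entropy_block {X K : Type*} [Fintype X] [Fintype K] (p : K → ℝ) (φ : K → Matrix X X ℂ)
    (hφ : ∀ k, IsState (φ k)) :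
    vonNeumannEntropy (Matrix.blockDiagonal fun k => (p k : ℂ) • φ k) =
      ∑ k, -(p k * Real.logb 2 (p k)) + ∑ k, p k * vonNeumannEntropy (φ k) := by
  choose U d hd hU hU2 hφ' using fun k => exists_diag (hφ k).1
  have h1 : ∀ k, ∑ i, d k i = 1 := by
    intro k
    have h2 := trace_diag_conj (p := d k) (hU k)
    rw [← hφ' k, (hφ k).2] at h2
    exact_mod_cast h2.symm
  rw [entropy_of_diag (Matrix.blockDiagonal U) (fun z : X × K => p z.2 * d z.2 z.1)]
  · rw [Fintype.sum_prod_type_right, ← Finset.sum_add_distrib]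
    refine Finset.sum_congr rfl fun k _ => ?_
    rw [entropy_of_diag (U k) (d k) (hU k) (hφ' k)]
    simp only [eta_mul, Finset.sum_add_distrib, ← Finset.sum_mul, ← Finset.mul_sum, h1, one_mul]
  · rw [Matrix.blockDiagonal_conjTranspose, ← Matrix.blockDiagonal_mul]
    simp only [hU]
    exact Matrix.blockDiagonal_one
  · have e : (diagonal fun z : X × K => ((p z.2 * d z.2 z.1 : ℝ) : ℂ)) =
        Matrix.blockDiagonal fun k => diagonal fun i => ((p k * d k i : ℝ) : ℂ) := by
      rw [Matrix.blockDiagonal_diagonal]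
    rw [e, Matrix.blockDiagonal_conjTranspose, ← Matrix.blockDiagonal_mul,
      ← Matrix.blockDiagonal_mul]
    congr 1
    funext k
    have e2 : (diagonal fun i => ((p k * d k i : ℝ) : ℂ)) =
        (p k : ℂ) • diagonal fun i => ((d k i : ℝ) : ℂ) := by
      ext i j
      by_cases h : i = j <;> simp [h]
    rw [e2, Matrix.mul_smul, Matrix.smul_mul, ← hφ' k]

/-- The classical-quantum extension given by an ensemble. -/
def ensExt {K : Type*} (p : K → ℝ) (ψ : K → A × B → ℂ) :
    Matrix (A × B × K) (A × B × K) ℂ :=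
  fun x y => if x.2.2 = y.2.2 then
    (p x.2.2 : ℂ) * (ψ x.2.2 (x.1, x.2.1) * star (ψ x.2.2 (y.1, y.2.1))) else 0

lemma ens_spec {K : Type*} [Fintype K] (p : K → ℝ) (ψ : K → A × B → ℂ) (hp : ∀ k, 0 ≤ p k)
    (h1 : ∑ k, p k = 1) (hψ : ∀ k, ∑ i, ‖ψ k i‖ ^ 2 = 1) :
    IsState (ensExt p ψ) ∧ margAB (ensExt p ψ) = ∑ k, (p k : ℂ) • outer (ψ k) ∧
    (1 / 2) * condMutualInfo (ensExt p ψ) =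
      ∑ k, p k * vonNeumannEntropy (ptraceR (outer (ψ k))) := by
  have hs : ∀ k, (p k : ℂ) = (Real.sqrt (p k) : ℂ) * (Real.sqrt (p k) : ℂ) := by
    intro k
    rw [← Complex.ofReal_mul, Real.mul_self_sqrt (hp k)]
  have hψ2 : ∀ k, ∑ i, ψ k i * star (ψ k i) = 1 := by
    intro k
    have h2 : ∀ i, ψ k i * star (ψ k i) = ((‖ψ k i‖ ^ 2 : ℝ) : ℂ) := by
      intro i
      rw [Complex.star_def, Complex.mul_conj, Complex.normSq_eq_norm_sq]
    simp only [h2]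
    exact_mod_cast hψ k
  let M : Matrix (A × B × K) K ℂ := Matrix.of fun x k =>
    if x.2.2 = k then (Real.sqrt (p k) : ℂ) * ψ k (x.1, x.2.1) else 0
  have hM : ensExt p ψ = M * Mᴴ := by
    ext x y
    rw [Matrix.mul_apply]
    simp only [Matrix.conjTranspose_apply, Matrix.of_apply, M, ensExt, ite_mul, zero_mul, Finset.sum_ite_eq,
      Finset.mem_univ, if_true]
    by_cases h : x.2.2 = y.2.2
    · rw [if_pos h, if_pos h.symm, hs, star_mul']
      simp only [Complex.star_def, Complex.conj_ofReal]
      ring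
    · rw [if_neg h, if_neg (fun h' => h h'.symm)]
      simp
  have hM2 : Mᴴ * M = margE (ensExt p ψ) := by
    ext k k'
    rw [Matrix.mul_apply]
    simp only [Matrix.conjTranspose_apply, Matrix.of_apply, M, margE, ensExt, Fintype.sum_prod_type]
    refine Finset.sum_congr rfl fun a _ => Finset.sum_congr rfl fun b _ => ?_
    by_cases h : k = k'
    · subst h
      simp only [apply_ite star, star_zero, mul_ite, ite_mul, mul_zero, zero_mul,
        Finset.sum_ite_eq', Finset.mem_univ, if_true, star_mul', Complex.star_def,
        Complex.conj_ofReal, hs]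
      ring
    · simp only [apply_ite star, star_zero, mul_ite, ite_mul, mul_zero, zero_mul,
        Finset.sum_ite_eq', Finset.mem_univ, if_true, if_neg h, if_neg (Ne.symm h)]
  have hpsd : (ensExt p ψ).PosSemidef := hM ▸ Matrix.posSemidef_self_mul_conjTranspose _
  have hmE : margE (ensExt p ψ) = diagonal (fun k => (p k : ℂ)) := by
    ext k k'
    by_cases h : k = k'
    · subst h
      have h2 := hψ2 k
      rw [Fintype.sum_prod_type] at h2
      simp only [margE, ensExt, if_true, ← Finset.mul_sum, h2, mul_one, Matrix.diagonal_apply_eq]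
    · simp [margE, ensExt, h]
  have hSE : vonNeumannEntropy (margE (ensExt p ψ)) = ∑ k, -(p k * Real.logb 2 (p k)) := by
    refine entropy_of_diag (1 : Matrix K K ℂ) p (by simp) ?_
    rw [hmE]
    simp
  have hSall : vonNeumannEntropy (ensExt p ψ) = vonNeumannEntropy (margE (ensExt p ψ)) := by
    have := entropy_mul_comm M Mᴴ (hM ▸ hpsd.1) (hM2 ▸ (margE_psd hpsd).1)
    rwa [← hM, hM2] at this
  have hAE : margAE (ensExt p ψ) =
      Matrix.blockDiagonal fun k => (p k : ℂ) • ptraceR (outer (ψ k)) := by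
    ext ⟨a, k⟩ ⟨a', k'⟩
    rw [Matrix.blockDiagonal_apply]
    by_cases h : k = k'
    · subst h
      simp only [margAE, ensExt, if_true, Matrix.smul_apply, ptraceR, outer,
        Matrix.vecMulVec_apply, Pi.star_apply, smul_eq_mul, Finset.mul_sum]
    · simp [margAE, ensExt, h]
  have hst : ∀ k, IsState (ptraceR (outer (ψ k))) := by
    intro k
    constructor
    · exact psd_sum_sub (Matrix.posSemidef_vecMulVec_self_star (ψ k)) (fun (b : B) (a : A) => (a, b))
    · rw [← hψ2 k, Fintype.sum_prod_type]
      rfl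
  have hSAE := entropy_block p (fun k => ptraceR (outer (ψ k))) hst
  rw [← hAE] at hSAE
  let N : Matrix (A × K) (B × K) ℂ := Matrix.blockDiagonal fun k =>
    Matrix.of fun a b => (Real.sqrt (p k) : ℂ) * ψ k (a, b)
  have hN1 : N * Nᴴ = margAE (ensExt p ψ) := by
    rw [hAE]
    simp only [N]
    rw [Matrix.blockDiagonal_conjTranspose, ← Matrix.blockDiagonal_mul]
    congr 1
    funext k
    ext a a'
    rw [Matrix.mul_apply]
    simp only [Matrix.smul_apply, ptraceR, outer, Matrix.vecMulVec_apply, Pi.star_apply,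
      smul_eq_mul, Finset.mul_sum, Matrix.conjTranspose_apply, Matrix.of_apply, star_mul',
      Complex.star_def, Complex.conj_ofReal, hs]
    exact Finset.sum_congr rfl fun b _ => by ring
  have hN2 : Nᴴ * N = (margBE (ensExt p ψ))ᵀ := by
    simp only [N]
    rw [Matrix.blockDiagonal_conjTranspose, ← Matrix.blockDiagonal_mul]
    ext ⟨b, k⟩ ⟨b', k'⟩
    rw [Matrix.blockDiagonal_apply, Matrix.transpose_apply]
    by_cases h : k = k'
    · subst h
      rw [if_pos rfl, Matrix.mul_apply]
      simp only [margBE, ensExt, if_true, Matrix.conjTranspose_apply, Matrix.of_apply, star_mul',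
        Complex.star_def, Complex.conj_ofReal, hs]
      exact Finset.sum_congr rfl fun a _ => by ring
    · rw [if_neg h]
      simp [margBE, ensExt, Ne.symm h]
  have hSBE : vonNeumannEntropy (margBE (ensExt p ψ)) = vonNeumannEntropy (margAE (ensExt p ψ)) := by
    rw [← entropy_transpose (margBE_psd hpsd).1, ← hN1, ← hN2]
    refine (entropy_mul_comm N Nᴴ ?_ ?_).symm
    · exact (Matrix.posSemidef_self_mul_conjTranspose _).1
    · exact (Matrix.posSemidef_conjTranspose_mul_self _).1
  refine ⟨⟨hpsd, ?_⟩, ?_, ?_⟩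
  · rw [hM, Matrix.trace_mul_comm, hM2, hmE, Matrix.trace_diagonal]
    exact_mod_cast h1
  · ext x y
    rw [Matrix.sum_apply]
    simp only [margAB, ensExt, if_true, Matrix.smul_apply, outer, Matrix.vecMulVec_apply,
      Pi.star_apply, smul_eq_mul]
  · unfold condMutualInfo
    rw [hSBE, hSall, hSAE, hSE]
    ring

theorem main_bound {ρ : Matrix (A × B) (A × B) ℂ} (hρ : IsState ρ) (n : ℕ) :
    (n : ℝ) * Esq ρ ≤ EoF (tensorPow ρ n) := by
  have hst : IsState (tensorPow ρ n) := ⟨tensorPow_psd hρ.1 n, sum_tensorPow hρ.2 n⟩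
  refine le_csInf (EoF_nonempty hst) ?_
  rintro x ⟨K, p, ψ, hp, h1, hψ, hsum, rfl⟩
  obtain ⟨hs, hm, hv⟩ := ens_spec p ψ hp h1 hψ
  rw [← hv]
  exact induct_bound hρ n K (ensExt p ψ) hs (hm.trans hsum)

end Final

/-- `n · E_sq(ρ) ≤ E_F(ρ^{⊗n})` for every `n ≥ 1`; consequently squashed
entanglement is upper bounded by the entanglement cost
`E_C(ρ) = lim_{n→∞} (1/n) E_F(ρ^{⊗n})`. -/
theorem squashedEntanglement_le_entanglementCost
    {A B : Type*} [Fintype A] [Fintype B]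
    (ρ : Matrix (A × B) (A × B) ℂ) (hρ : IsState ρ) :
    (∀ n : ℕ, 1 ≤ n → (n : ℝ) * Esq ρ ≤ EoF (tensorPow ρ n)) ∧
    (∀ L : ℝ,
      Filter.Tendsto (fun n : ℕ => (1 / (n : ℝ)) * EoF (tensorPow ρ n)) Filter.atTop (nhds L) →
      Esq ρ ≤ L) := by
  refine ⟨fun n _ => main_bound hρ n, fun L hL => ?_⟩
  refine ge_of_tendsto hL ?_
  filter_upwards [Filter.eventually_ge_atTop 1] with n hn
  have h := main_bound hρ n
  have hn' : (0 : ℝ) < n := by exact_mod_cast hn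
  rw [one_div, ← div_eq_inv_mul, le_div_iff₀ hn']
  linarith

end
end

section
/- Squashed entanglement vanishes on separable states: if ρ^{AB} on H_A ⊗ H_B is separable, i.e. ρ^{AB} = ∑_i p_i |ψ_i⟩⟨ψ_i| ⊗ |φ_i⟩⟨φ_i| for some finite probability distribution (p_i) and unit vectors |ψ_i⟩ ∈ H_A, |φ_i⟩ ∈ H_B, then E_sq(ρ^{AB}) = 0. -/
open Matrix BigOperators Kronecker
open scoped Classical ComplexOrder

noncomputable section

variable {A B E : Type*} [Fintype A] [Fintype B] [Fintype E]

/-! ### Spectral decomposition -/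

lemma sq_spectral {n : Type*} [Fintype n] [inst : DecidableEq n] (ρ : Matrix n n ℂ)
    (h : ρ.PosSemidef) :
    ∃ (U : Matrix n n ℂ) (p : n → ℝ), U * Uᴴ = 1 ∧ Uᴴ * U = 1 ∧
      ρ = U * diagonal (fun i => (p i : ℂ)) * Uᴴ ∧ (∀ i, 0 ≤ p i) ∧
      vonNeumannEntropy ρ * Real.log 2 = -∑ i, p i * Real.log (p i) := by
  obtain rfl : inst = fun a b => Classical.propDecidable (a = b) := Subsingleton.elim _ _
  have hh := h.isHermitian
  refine ⟨(hh.eigenvectorUnitary : Matrix n n ℂ), hh.eigenvalues, ?_, ?_, ?_, ?_, ?_⟩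
  · exact Unitary.coe_mul_star_self hh.eigenvectorUnitary
  · exact Unitary.coe_star_mul_self hh.eigenvectorUnitary
  · have := hh.spectral_theorem
    rw [Unitary.conjStarAlgAut_apply] at this
    exact this
  · exact h.eigenvalues_nonneg
  · rw [vonNeumannEntropy, dif_pos hh, Finset.sum_mul, ← Finset.sum_neg_distrib]
    refine Finset.sum_congr rfl fun i _ => ?_
    have : Real.log 2 ≠ 0 := (Real.log_pos (by norm_num)).ne'
    rw [Real.logb]
    field_simp

/-- The entropy is determined by the nonzero part of the spectrum. -/
lemma sq_entropy_eq_roots {n : Type*} [Fintype n] [inst : DecidableEq n] (ρ : Matrix n n ℂ)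
    (hh : ρ.IsHermitian) :
    vonNeumannEntropy ρ = (ρ.charpoly.roots.map
      (fun z : ℂ => -(z.re * Real.logb 2 z.re))).sum := by
  obtain rfl : inst = fun a b => Classical.propDecidable (a = b) := Subsingleton.elim _ _
  rw [hh.roots_charpoly_eq_eigenvalues, vonNeumannEntropy, dif_pos hh, Multiset.map_map]
  rfl

lemma sq_entropy_mul_comm {m n : Type*} [Fintype m] [Fintype n]
    (X : Matrix m n ℂ) (Y : Matrix n m ℂ) (h1 : (X * Y).IsHermitian) (h2 : (Y * X).IsHermitian) :
    vonNeumannEntropy (X * Y) = vonNeumannEntropy (Y * X) := by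
  rw [sq_entropy_eq_roots _ h1, sq_entropy_eq_roots _ h2]
  have h := congrArg Polynomial.roots (Matrix.charpoly_mul_comm' X Y)
  have hx : ∀ k : ℕ, (Polynomial.X ^ k : Polynomial ℂ) ≠ 0 := fun k =>
    pow_ne_zero _ Polynomial.X_ne_zero
  rw [Polynomial.roots_mul (mul_ne_zero (hx _) (Matrix.charpoly_monic _).ne_zero),
    Polynomial.roots_mul (mul_ne_zero (hx _) (Matrix.charpoly_monic _).ne_zero)] at h
  have h' := congrArg (fun s : Multiset ℂ =>
    (s.map (fun z : ℂ => -(z.re * Real.logb 2 z.re))).sum) h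
  simpa [Polynomial.roots_X_pow, Multiset.map_nsmul, Multiset.sum_nsmul] using h'

/-! ### The quadratic functional -/

def sqQ {n : Type*} [Fintype n] (p q : n → ℝ) (W : Matrix n n ℂ) (s : ℝ) : ℝ :=
  ∑ k, ∑ j, ‖W k j‖ ^ 2 * (p j ^ 2 / (s * p j + q k))

def sqJ {n : Type*} [Fintype n] (ρ σ : Matrix n n ℂ) (s : ℝ) (X : Matrix n n ℂ) : ℝ :=
  2 * ((Xᴴ * ρ).trace).re - s * ((Xᴴ * X * ρ).trace).re - ((X * Xᴴ * σ).trace).re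

lemma sqJ_eq {n : Type*} [Fintype n] [DecidableEq n] (U V Y : Matrix n n ℂ) (p q : n → ℝ)
    (hU' : Uᴴ * U = 1) (hV' : Vᴴ * V = 1) (s : ℝ) :
    sqJ (U * diagonal (fun i => (p i : ℂ)) * Uᴴ) (V * diagonal (fun i => (q i : ℂ)) * Vᴴ) s
      (V * Y * Uᴴ) =
    ∑ k, ∑ j, (2 * (star (Y k j) * (Vᴴ * U) k j).re * p j - (s * p j + q k) * ‖Y k j‖ ^ 2) := by
  have e1 : ((V * Y * Uᴴ)ᴴ * (U * diagonal (fun i => (p i : ℂ)) * Uᴴ)).trace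
      = (Yᴴ * (Vᴴ * U) * diagonal (fun i => (p i : ℂ))).trace := by
    simp only [conjTranspose_mul, conjTranspose_conjTranspose, Matrix.mul_assoc]
    rw [Matrix.trace_mul_comm]
    simp only [Matrix.mul_assoc, hU', Matrix.mul_one]
  have e2 : ((V * Y * Uᴴ)ᴴ * (V * Y * Uᴴ) * (U * diagonal (fun i => (p i : ℂ)) * Uᴴ)).trace
      = (Yᴴ * Y * diagonal (fun i => (p i : ℂ))).trace := by
    simp only [conjTranspose_mul, conjTranspose_conjTranspose, Matrix.mul_assoc]
    rw [Matrix.trace_mul_comm]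
    simp only [Matrix.mul_assoc, hU', Matrix.mul_one]
    rw [← Matrix.mul_assoc Uᴴ U, hU', Matrix.one_mul, ← Matrix.mul_assoc Vᴴ V, hV', Matrix.one_mul]
  have e3 : ((V * Y * Uᴴ) * (V * Y * Uᴴ)ᴴ * (V * diagonal (fun i => (q i : ℂ)) * Vᴴ)).trace
      = (Y * Yᴴ * diagonal (fun i => (q i : ℂ))).trace := by
    simp only [conjTranspose_mul, conjTranspose_conjTranspose, Matrix.mul_assoc]
    rw [Matrix.trace_mul_comm]
    simp only [Matrix.mul_assoc, hV', Matrix.mul_one]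
    rw [← Matrix.mul_assoc Uᴴ U, hU', Matrix.one_mul, ← Matrix.mul_assoc Vᴴ V, hV', Matrix.one_mul]
  have n2 : ∀ z : ℂ, (star z * z).re = ‖z‖ ^ 2 := fun z => by
    rw [← Complex.normSq_eq_norm_sq, Complex.normSq_apply]; simp
  have n3 : ∀ z : ℂ, (z * star z).re = ‖z‖ ^ 2 := fun z => by rw [mul_comm, n2]
  have f1 : ((Yᴴ * (Vᴴ * U) * diagonal (fun i => (p i : ℂ))).trace).re
      = ∑ k, ∑ j, (star (Y k j) * (Vᴴ * U) k j).re * p j := by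
    rw [Finset.sum_comm]
    simp only [Matrix.trace, Matrix.diag, Matrix.mul_diagonal, Complex.re_sum,
      Complex.re_mul_ofReal]
    refine Finset.sum_congr rfl fun j _ => ?_
    rw [Matrix.mul_apply, Complex.re_sum, Finset.sum_mul]
    rfl
  have f2 : ((Yᴴ * Y * diagonal (fun i => (p i : ℂ))).trace).re
      = ∑ k, ∑ j, ‖Y k j‖ ^ 2 * p j := by
    rw [Finset.sum_comm]
    simp only [Matrix.trace, Matrix.diag, Matrix.mul_diagonal, Complex.re_sum,
      Complex.re_mul_ofReal]
    refine Finset.sum_congr rfl fun j _ => ?_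
    rw [Matrix.mul_apply, Complex.re_sum, Finset.sum_mul]
    simp only [conjTranspose_apply, n2]
  have f3 : ((Y * Yᴴ * diagonal (fun i => (q i : ℂ))).trace).re
      = ∑ k, ∑ j, ‖Y k j‖ ^ 2 * q k := by
    simp only [Matrix.trace, Matrix.diag, Matrix.mul_diagonal, Complex.re_sum,
      Complex.re_mul_ofReal]
    refine Finset.sum_congr rfl fun j _ => ?_
    rw [Matrix.mul_apply, Complex.re_sum, Finset.sum_mul]
    simp only [conjTranspose_apply, n3]
  rw [sqJ, e1, e2, e3, f1, f2, f3]
  simp only [Finset.mul_sum, ← Finset.sum_sub_distrib]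
  refine Finset.sum_congr rfl fun k _ => Finset.sum_congr rfl fun j _ => ?_
  ring

lemma sq_scalar (x w : ℂ) (p c : ℝ) (hc : 0 < c) :
    2 * (star x * w).re * p - c * ‖x‖ ^ 2 ≤ ‖w‖ ^ 2 * (p ^ 2 / c) := by
  rw [← mul_div_assoc, le_div_iff₀ hc, ← Complex.normSq_eq_norm_sq, ← Complex.normSq_eq_norm_sq,
    Complex.normSq_apply, Complex.normSq_apply]
  simp only [Complex.star_def, Complex.mul_re, Complex.conj_re, Complex.conj_im]
  nlinarith [sq_nonneg (c * x.re - w.re * p), sq_nonneg (c * x.im - w.im * p)]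

lemma sq_scalar_eq (w : ℂ) (p c : ℝ) (hc : 0 < c) :
    2 * (star (((p / c : ℝ) : ℂ) * w) * w).re * p - c * ‖((p / c : ℝ) : ℂ) * w‖ ^ 2
      = ‖w‖ ^ 2 * (p ^ 2 / c) := by
  rw [← Complex.normSq_eq_norm_sq, ← Complex.normSq_eq_norm_sq,
    Complex.normSq_apply, Complex.normSq_apply]
  simp only [Complex.star_def, Complex.mul_re, Complex.mul_im, Complex.conj_re, Complex.conj_im,
    Complex.ofReal_re, Complex.ofReal_im]
  field_simp
  ring

lemma sqJ_le {n : Type*} [Fintype n] [DecidableEq n] (U V X : Matrix n n ℂ) (p q : n → ℝ)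
    (hU' : Uᴴ * U = 1) (hV : V * Vᴴ = 1) (hV' : Vᴴ * V = 1) (s : ℝ)
    (hs : 0 ≤ s) (hp : ∀ i, 0 ≤ p i) (hq : ∀ i, 0 < q i) :
    sqJ (U * diagonal (fun i => (p i : ℂ)) * Uᴴ) (V * diagonal (fun i => (q i : ℂ)) * Vᴴ) s X
      ≤ sqQ p q (Vᴴ * U) s := by
  have hU : U * Uᴴ = 1 := mul_eq_one_comm.mp hU'
  have hX : X = V * (Vᴴ * X * U) * Uᴴ := by
    rw [Matrix.mul_assoc, Matrix.mul_assoc, Matrix.mul_assoc, hU, Matrix.mul_one,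
      ← Matrix.mul_assoc, hV, Matrix.one_mul]
  rw [hX, sqJ_eq _ _ _ _ _ hU' hV', sqQ]
  refine Finset.sum_le_sum fun k _ => Finset.sum_le_sum fun j _ => ?_
  exact sq_scalar _ _ _ _ (add_pos_of_nonneg_of_pos (mul_nonneg hs (hp j)) (hq k))

lemma sqJ_attained {n : Type*} [Fintype n] [DecidableEq n] (U V : Matrix n n ℂ) (p q : n → ℝ)
    (hU' : Uᴴ * U = 1) (hV' : Vᴴ * V = 1) (s : ℝ)
    (hs : 0 ≤ s) (hp : ∀ i, 0 ≤ p i) (hq : ∀ i, 0 < q i) :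
    ∃ X, sqJ (U * diagonal (fun i => (p i : ℂ)) * Uᴴ) (V * diagonal (fun i => (q i : ℂ)) * Vᴴ) s X
      = sqQ p q (Vᴴ * U) s := by
  refine ⟨V * (Matrix.of fun k j => (((p j / (s * p j + q k) : ℝ) : ℂ) * (Vᴴ * U) k j)) * Uᴴ, ?_⟩
  rw [sqJ_eq _ _ _ _ _ hU' hV', sqQ]
  refine Finset.sum_congr rfl fun k _ => Finset.sum_congr rfl fun j _ => ?_
  exact sq_scalar_eq _ _ _ (add_pos_of_nonneg_of_pos (mul_nonneg hs (hp j)) (hq k))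

/-! ### Passing to logarithms -/

def sqL {n : Type*} [Fintype n] (p q : n → ℝ) (W : Matrix n n ℂ) (s : ℝ) : ℝ :=
  ∑ k, ∑ j, ‖W k j‖ ^ 2 * (p j * (Real.log (s * p j + q k) - Real.log (q k)))

lemma sqL_hasDerivAt {n : Type*} [Fintype n] (p q : n → ℝ) (W : Matrix n n ℂ) (s : ℝ)
    (hs : 0 ≤ s) (hp : ∀ i, 0 ≤ p i) (hq : ∀ i, 0 < q i) :
    HasDerivAt (sqL p q W) (sqQ p q W s) s := by
  unfold sqL sqQ
  refine HasDerivAt.fun_sum fun k _ => HasDerivAt.fun_sum fun j _ => ?_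
  have hc : s * p j + q k ≠ 0 :=
    (add_pos_of_nonneg_of_pos (mul_nonneg hs (hp j)) (hq k)).ne'
  have h1 : HasDerivAt (fun s : ℝ => s * p j + q k) (1 * p j) s :=
    ((hasDerivAt_id s).mul_const (p j)).add_const (q k)
  have h2 := (((h1.log hc).sub_const (Real.log (q k))).const_mul (p j)).const_mul (‖W k j‖ ^ 2)
  refine h2.congr_deriv ?_
  ring

lemma sqL_tendsto {n : Type*} [Fintype n] (p q : n → ℝ) (W : Matrix n n ℂ)
    (hp : ∀ i, 0 ≤ p i) (hW : ∀ j, ∑ k, ‖W k j‖ ^ 2 = 1) :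
    Filter.Tendsto (fun s => sqL p q W s - Real.log s * ∑ j, p j) Filter.atTop
      (nhds (∑ j, p j * Real.log (p j) - ∑ k, (∑ j, ‖W k j‖ ^ 2 * p j) * Real.log (q k))) := by
  have e1 : ∑ j, p j * Real.log (p j) - ∑ k, (∑ j, ‖W k j‖ ^ 2 * p j) * Real.log (q k)
      = ∑ k, ∑ j, ‖W k j‖ ^ 2 * (p j * (Real.log (p j) - Real.log (q k))) := by
    have : ∑ j, p j * Real.log (p j) = ∑ k, ∑ j, ‖W k j‖ ^ 2 * (p j * Real.log (p j)) := by
      rw [Finset.sum_comm]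
      refine Finset.sum_congr rfl fun j _ => ?_
      rw [← Finset.sum_mul, hW, one_mul]
    rw [this, ← Finset.sum_sub_distrib]
    refine Finset.sum_congr rfl fun k _ => ?_
    rw [Finset.sum_mul, ← Finset.sum_sub_distrib]
    refine Finset.sum_congr rfl fun j _ => ?_
    ring
  have e2 : ∀ s, sqL p q W s - Real.log s * ∑ j, p j
      = ∑ k, ∑ j, ‖W k j‖ ^ 2 * (p j * ((Real.log (s * p j + q k) - Real.log s)
        - Real.log (q k))) := by
    intro s
    have : Real.log s * ∑ j, p j = ∑ k, ∑ j, ‖W k j‖ ^ 2 * (p j * Real.log s) := by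
      rw [Finset.sum_comm, Finset.mul_sum]
      refine Finset.sum_congr rfl fun j _ => ?_
      rw [← Finset.sum_mul, hW, one_mul, mul_comm]
    rw [this, sqL, ← Finset.sum_sub_distrib]
    refine Finset.sum_congr rfl fun k _ => ?_
    rw [← Finset.sum_sub_distrib]
    refine Finset.sum_congr rfl fun j _ => ?_
    ring
  rw [e1]
  simp only [e2]
  refine tendsto_finsetSum _ fun k _ => tendsto_finsetSum _ fun j _ => ?_
  refine Filter.Tendsto.const_mul _ ?_
  rcases (hp j).eq_or_lt with h0 | h0
  · simp [← h0]
  refine Filter.Tendsto.const_mul _ (Filter.Tendsto.sub_const ?_ _)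
  have h3 : Filter.Tendsto (fun s : ℝ => p j + q k / s) Filter.atTop (nhds (p j)) := by
    simpa using (Filter.Tendsto.const_div_atTop Filter.tendsto_id (q k)).const_add (p j)
  have h4 := h3.log h0.ne'
  refine h4.congr' ?_
  filter_upwards [Filter.eventually_gt_atTop 0,
    h3.eventually (lt_mem_nhds h0)] with s hs hs2
  have : s * p j + q k = s * (p j + q k / s) := by field_simp
  rw [this, Real.log_mul hs.ne' hs2.ne']
  ring

lemma sq_log_mono {m n : Type*} [Fintype m] [Fintype n] (p q : n → ℝ) (W : Matrix n n ℂ)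
    (p' q' : m → ℝ) (W' : Matrix m m ℂ)
    (hp : ∀ i, 0 ≤ p i) (hq : ∀ i, 0 < q i) (hp' : ∀ i, 0 ≤ p' i) (hq' : ∀ i, 0 < q' i)
    (hW : ∀ j, ∑ k, ‖W k j‖ ^ 2 = 1) (hW' : ∀ j, ∑ k, ‖W' k j‖ ^ 2 = 1)
    (hsum : ∑ j, p' j = ∑ j, p j)
    (hQ : ∀ s, 0 ≤ s → sqQ p' q' W' s ≤ sqQ p q W s) :
    ∑ j, p' j * Real.log (p' j) - ∑ k, (∑ j, ‖W' k j‖ ^ 2 * p' j) * Real.log (q' k)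
      ≤ ∑ j, p j * Real.log (p j) - ∑ k, (∑ j, ‖W k j‖ ^ 2 * p j) * Real.log (q k) := by
  have hd : ∀ s, 0 ≤ s → HasDerivAt (fun s => sqL p q W s - sqL p' q' W' s)
      (sqQ p q W s - sqQ p' q' W' s) s := fun s hs =>
    (sqL_hasDerivAt p q W s hs hp hq).sub (sqL_hasDerivAt p' q' W' s hs hp' hq')
  have hm : MonotoneOn (fun s => sqL p q W s - sqL p' q' W' s) (Set.Ici 0) := by
    refine monotoneOn_of_deriv_nonneg (convex_Ici 0) ?_ ?_ ?_
    · exact fun s hs => (hd s hs).continuousAt.continuousWithinAt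
    · exact fun s hs => (hd s (interior_subset hs)).differentiableAt.differentiableWithinAt
    · intro s hs
      rw [(hd s (interior_subset hs)).deriv]
      exact sub_nonneg.mpr (hQ s (interior_subset hs))
  refine le_of_tendsto_of_tendsto (sqL_tendsto p' q' W' hp' hW') (sqL_tendsto p q W hp hW) ?_
  filter_upwards [Filter.eventually_ge_atTop 0] with s hs
  have h := hm (Set.mem_Ici.mpr le_rfl) (Set.mem_Ici.mpr hs) hs
  have z : sqL p q W 0 = 0 := by simp [sqL]
  have z' : sqL p' q' W' 0 = 0 := by simp [sqL]
  simp only [z, z', sub_zero] at h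
  rw [hsum]
  linarith

lemma sq_mono {m n : Type*} [Fintype m] [Fintype n] [DecidableEq m] [DecidableEq n]
    (f : Matrix m m ℂ → Matrix n n ℂ)
    (f_star : ∀ X, f Xᴴ = (f X)ᴴ) (f_mul : ∀ X Y, f (X * Y) = f X * f Y)
    (ρ σ U V : Matrix n n ℂ) (p q : n → ℝ) (ρ' σ' U' V' : Matrix m m ℂ) (p' q' : m → ℝ)
    (hU : Uᴴ * U = 1) (hV : V * Vᴴ = 1) (hV2 : Vᴴ * V = 1)
    (hU' : U'ᴴ * U' = 1) (hV' : V'ᴴ * V' = 1)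
    (hρ : ρ = U * diagonal (fun i => (p i : ℂ)) * Uᴴ)
    (hσ : σ = V * diagonal (fun i => (q i : ℂ)) * Vᴴ)
    (hρ' : ρ' = U' * diagonal (fun i => (p' i : ℂ)) * U'ᴴ)
    (hσ' : σ' = V' * diagonal (fun i => (q' i : ℂ)) * V'ᴴ)
    (fρ : ∀ Z, (f Z * ρ).trace = (Z * ρ').trace) (fσ : ∀ Z, (f Z * σ).trace = (Z * σ').trace)
    (hp : ∀ i, 0 ≤ p i) (hq : ∀ i, 0 < q i) (hp' : ∀ i, 0 ≤ p' i) (hq' : ∀ i, 0 < q' i)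
    (s : ℝ) (hs : 0 ≤ s) :
    sqQ p' q' (V'ᴴ * U') s ≤ sqQ p q (Vᴴ * U) s := by
  obtain ⟨X, hX⟩ := sqJ_attained U' V' p' q' hU' hV' s hs hp' hq'
  rw [← hX, ← hρ', ← hσ']
  refine le_trans (le_of_eq ?_) (sqJ_le U V (f X) p q hU hV hV2 s hs hp hq)
  rw [← hρ, ← hσ, sqJ, sqJ, ← f_star, ← f_mul, ← f_mul, fρ, fρ, fσ]

lemma sq_col_sum {n : Type*} [Fintype n] [DecidableEq n] (U V : Matrix n n ℂ)
    (hU : Uᴴ * U = 1) (hV : V * Vᴴ = 1) (j : n) : ∑ k, ‖(Vᴴ * U) k j‖ ^ 2 = 1 := by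
  have h : (Vᴴ * U)ᴴ * (Vᴴ * U) = 1 := by
    rw [conjTranspose_mul, conjTranspose_conjTranspose, Matrix.mul_assoc, ← Matrix.mul_assoc V,
      hV, Matrix.one_mul, hU]
  have h2 := congrFun (congrFun h j) j
  rw [Matrix.mul_apply, Matrix.one_apply_eq] at h2
  have h3 := congrArg Complex.re h2
  rw [Complex.re_sum, Complex.one_re] at h3
  rw [← h3]
  refine Finset.sum_congr rfl fun k _ => ?_
  rw [← Complex.normSq_eq_norm_sq, Complex.normSq_apply, conjTranspose_apply]
  simp

lemma sq_diag_entry {n : Type*} [Fintype n] [DecidableEq n] (U V : Matrix n n ℂ) (p : n → ℝ)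
    (k : n) : ∑ j, ‖(Vᴴ * U) k j‖ ^ 2 * p j
      = ((Vᴴ * (U * diagonal (fun i => (p i : ℂ)) * Uᴴ) * V) k k).re := by
  have h : Vᴴ * (U * diagonal (fun i => (p i : ℂ)) * Uᴴ) * V
      = (Vᴴ * U) * diagonal (fun i => (p i : ℂ)) * (Vᴴ * U)ᴴ := by
    simp only [conjTranspose_mul, conjTranspose_conjTranspose, Matrix.mul_assoc]
  rw [h, Matrix.mul_apply, Complex.re_sum]
  refine Finset.sum_congr rfl fun j _ => ?_
  rw [Matrix.mul_diagonal, conjTranspose_apply, ← Complex.normSq_eq_norm_sq, Complex.normSq_apply]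
  simp
  ring

lemma sq_ptraceL_conj {a m : Type*} [Fintype a] [Fintype m] [DecidableEq a]
    (ρ : Matrix (a × m) (a × m) ℂ) (V : Matrix m m ℂ) :
    ptraceL (((1 : Matrix a a ℂ) ⊗ₖ V)ᴴ * ρ * ((1 : Matrix a a ℂ) ⊗ₖ V)) = Vᴴ * ptraceL ρ * V := by
  ext i j
  simp only [ptraceL, Matrix.mul_apply, conjTranspose_apply, kroneckerMap_apply,
    Fintype.sum_prod_type, Matrix.one_apply, Finset.sum_mul, Finset.mul_sum]
  simp only [ite_mul, mul_ite, one_mul, zero_mul, mul_zero, apply_ite star, star_zero]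
  simp only [Finset.sum_ite_irrel, Finset.sum_const_zero, Finset.sum_ite_eq, Finset.sum_ite_eq',
    Finset.mem_univ, if_true]
  rw [Finset.sum_comm]
  refine Finset.sum_congr rfl fun y _ => ?_
  rw [Finset.sum_comm]

lemma sq_ptraceL_posSemidef {a m : Type*} [Fintype a] [Fintype m]
    (ρ : Matrix (a × m) (a × m) ℂ) (h : ρ.PosSemidef) : (ptraceL ρ).PosSemidef := by
  have : ptraceL ρ = ∑ x : a, ρ.submatrix (fun y => (x, y)) (fun y => (x, y)) := by
    ext i j
    simp [ptraceL, Matrix.sum_apply]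
  rw [this]
  exact Matrix.posSemidef_sum _ fun x _ => h.submatrix _

lemma sq_margAE_posSemidef {a b e : Type*} [Fintype a] [Fintype b] [Fintype e]
    (ρ : Matrix (a × b × e) (a × b × e) ℂ) (h : ρ.PosSemidef) : (margAE ρ).PosSemidef := by
  have : margAE ρ = ∑ x : b, ρ.submatrix (fun y : a × e => (y.1, x, y.2))
      (fun y => (y.1, x, y.2)) := by
    ext i j
    simp [margAE, Matrix.sum_apply]
  rw [this]
  exact Matrix.posSemidef_sum _ fun x _ => h.submatrix _

lemma sq_side {a m : Type*} [Fintype a] [Fintype m] [DecidableEq a] [DecidableEq m]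
    (ρ : Matrix (a × m) (a × m) ℂ) (h : ρ.PosSemidef) :
    ∃ (U V : Matrix (a × m) (a × m) ℂ) (p : a × m → ℝ) (q : m → ℝ),
      Uᴴ * U = 1 ∧ V * Vᴴ = 1 ∧ Vᴴ * V = 1 ∧
      ρ = U * diagonal (fun i => (p i : ℂ)) * Uᴴ ∧ (∀ i, 0 ≤ p i) ∧ (∀ i, 0 ≤ q i) ∧
      vonNeumannEntropy ρ * Real.log 2 = -∑ i, p i * Real.log (p i) ∧
      vonNeumannEntropy (ptraceL ρ) * Real.log 2 = -∑ i, q i * Real.log (q i) ∧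
      (∀ c : ℝ, (1 : Matrix a a ℂ) ⊗ₖ (ptraceL ρ + (c : ℂ) • (1 : Matrix m m ℂ))
        = V * diagonal (fun i : a × m => ((q i.2 + c : ℝ) : ℂ)) * Vᴴ) ∧
      (∀ g : m → ℝ, ∑ k : a × m, (∑ j, ‖(Vᴴ * U) k j‖ ^ 2 * p j) * g k.2 = ∑ i, q i * g i) := by
  obtain ⟨U, p, hU, hU', hρ, hp, hS⟩ := sq_spectral ρ h
  obtain ⟨V, q, hV, hV', hσ, hq, hS'⟩ := sq_spectral (ptraceL ρ) (sq_ptraceL_posSemidef ρ h)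
  refine ⟨U, (1 : Matrix a a ℂ) ⊗ₖ V, p, q, hU', ?_, ?_, hρ, hp, hq, hS, hS', ?_, ?_⟩
  · rw [conjTranspose_kronecker, ← mul_kronecker_mul, hV]
    simp
  · rw [conjTranspose_kronecker, ← mul_kronecker_mul, hV']
    simp
  · intro c
    have e : ptraceL ρ + (c : ℂ) • (1 : Matrix m m ℂ)
        = V * diagonal (fun i => ((q i + c : ℝ) : ℂ)) * Vᴴ := by
      have : diagonal (fun i => ((q i + c : ℝ) : ℂ))
          = diagonal (fun i => (q i : ℂ)) + (c : ℂ) • (1 : Matrix m m ℂ) := by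
        ext i j
        by_cases hij : i = j
        · subst hij; simp
        · simp [hij]
      rw [this, Matrix.mul_add, Matrix.add_mul, ← hσ]
      simp [hV]
    have e2 : diagonal (fun i : a × m => ((q i.2 + c : ℝ) : ℂ))
        = (1 : Matrix a a ℂ) ⊗ₖ diagonal (fun i => ((q i + c : ℝ) : ℂ)) := by
      rw [← diagonal_one, diagonal_kronecker_diagonal]
      simp
    rw [e, e2, conjTranspose_kronecker, ← mul_kronecker_mul, ← mul_kronecker_mul]
    simp
  · intro g
    have key : ∀ i, ∑ x : a, ∑ j, ‖((((1 : Matrix a a ℂ) ⊗ₖ V)ᴴ) * U) (x, i) j‖ ^ 2 * p j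
        = q i := by
      intro i
      simp only [sq_diag_entry, ← hρ]
      have h1 := congrFun (congrFun (sq_ptraceL_conj ρ V) i) i
      have h2 : Vᴴ * ptraceL ρ * V = diagonal (fun i => (q i : ℂ)) := by
        rw [hσ]
        simp only [Matrix.mul_assoc, hV', Matrix.mul_one]
        rw [← Matrix.mul_assoc, hV', Matrix.one_mul]
      rw [h2, diagonal_apply_eq, ptraceL] at h1
      rw [← Complex.re_sum, h1, Complex.ofReal_re]
    rw [Fintype.sum_prod_type, Finset.sum_comm]
    refine Finset.sum_congr rfl fun i _ => ?_
    rw [← key i, Finset.sum_mul]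

/-- The embedding `X ↦ X ⊗ 1_B`. -/
def sqEmb {a b e : Type*} [DecidableEq b]
    (X : Matrix (a × e) (a × e) ℂ) : Matrix (a × b × e) (a × b × e) ℂ :=
  fun x y => if x.2.1 = y.2.1 then X (x.1, x.2.2) (y.1, y.2.2) else 0

lemma sqEmb_star {a b e : Type*} [DecidableEq b]
    (X : Matrix (a × e) (a × e) ℂ) : sqEmb (b := b) Xᴴ = (sqEmb X)ᴴ := by
  ext x y
  by_cases h : x.2.1 = y.2.1
  · simp [sqEmb, conjTranspose_apply, h]
  · simp [sqEmb, conjTranspose_apply, h, Ne.symm h]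

lemma sqEmb_mul {a b e : Type*} [Fintype a] [Fintype b] [Fintype e] [DecidableEq b]
    (X Y : Matrix (a × e) (a × e) ℂ) : sqEmb (b := b) (X * Y) = sqEmb X * sqEmb Y := by
  ext ⟨x1, x2, x3⟩ ⟨y1, y2, y3⟩
  simp only [sqEmb, Matrix.mul_apply, Fintype.sum_prod_type, ite_mul, zero_mul, mul_ite, mul_zero]
  by_cases h : x2 = y2
  · subst h
    simp only [if_true]
    refine Finset.sum_congr rfl fun i _ => ?_
    rw [Finset.sum_comm]
    simp
  · simp only [h, if_false]
    symm
    refine Finset.sum_eq_zero fun i _ => Finset.sum_eq_zero fun j _ =>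
      Finset.sum_eq_zero fun k _ => ?_
    grind

lemma sqEmb_trace {a b e : Type*} [Fintype a] [Fintype b] [Fintype e] [DecidableEq b]
    (ρ : Matrix (a × b × e) (a × b × e) ℂ) (Z : Matrix (a × e) (a × e) ℂ) :
    (sqEmb Z * ρ).trace = (Z * margAE ρ).trace := by
  simp only [Matrix.trace, Matrix.diag, sqEmb, margAE, Matrix.mul_apply, Fintype.sum_prod_type,
    ite_mul, zero_mul, Finset.mul_sum]
  refine Finset.sum_congr rfl fun x _ => ?_
  rw [Finset.sum_comm]
  refine Finset.sum_congr rfl fun z _ => ?_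
  rw [Finset.sum_comm]
  refine Finset.sum_congr rfl fun x' _ => ?_
  simp only [Finset.sum_comm (s := (Finset.univ : Finset b)) (t := (Finset.univ : Finset e))]
  refine Finset.sum_congr rfl fun z' _ => ?_
  simp

lemma sq_margAE_one_kron {a b e : Type*} [Fintype a] [Fintype b] [Fintype e] [DecidableEq a]
    [DecidableEq b] [DecidableEq e] (ρ : Matrix (a × b × e) (a × b × e) ℂ) (c : ℝ) :
    margAE ((1 : Matrix a a ℂ) ⊗ₖ (ptraceL ρ + (c : ℂ) • (1 : Matrix (b × e) (b × e) ℂ)))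
      = (1 : Matrix a a ℂ) ⊗ₖ (ptraceL (margAE ρ)
        + ((Fintype.card b * c : ℝ) : ℂ) • (1 : Matrix e e ℂ)) := by
  ext ⟨x1, x2⟩ ⟨y1, y2⟩
  simp only [margAE, ptraceL, kroneckerMap_apply, Matrix.add_apply, Matrix.smul_apply,
    Matrix.one_apply, Prod.mk.injEq, true_and]
  rw [Finset.sum_comm]
  by_cases h : x2 = y2 <;> by_cases h' : x1 = y1 <;> simp [h, h', Finset.sum_add_distrib]

lemma sq_tendsto_entropy {m : Type*} [Fintype m] (q : m → ℝ) (d : ℝ) :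
    Filter.Tendsto (fun c : ℝ => ∑ i, q i * Real.log (q i + d * c)) (nhdsWithin 0 (Set.Ioi 0))
      (nhds (∑ i, q i * Real.log (q i))) := by
  refine tendsto_finsetSum _ fun i _ => ?_
  by_cases h : q i = 0
  · simp [h]
  have h1 : ContinuousAt (fun c : ℝ => q i * Real.log (q i + d * c)) 0 := by
    refine continuousAt_const.mul (ContinuousAt.log (by fun_prop) (by simpa using h))
  have h2 := h1.tendsto
  simp only [mul_zero, add_zero] at h2
  exact h2.mono_left nhdsWithin_le_nhds

/-- Strong subadditivity. -/
theorem sq_ssa {a b e : Type*} [Fintype a] [Fintype b] [Fintype e]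
    (ρ : Matrix (a × b × e) (a × b × e) ℂ) (h : IsState ρ) : 0 ≤ condMutualInfo ρ := by
  obtain ⟨hρ, htr⟩ := h
  have hb : 0 < Fintype.card b := by
    rw [Fintype.card_pos_iff]
    by_contra hb
    rw [not_nonempty_iff] at hb
    simp [Matrix.trace] at htr
  have hb' : (0 : ℝ) < Fintype.card b := by exact_mod_cast hb
  obtain ⟨U, V, p, q, hU, hV, hV2, hd, hp, hq, hS1, hS2, hσ, hg⟩ := sq_side ρ hρ
  obtain ⟨U', V', p', q', hU', hV', hV2', hd', hp', hq', hS1', hS2', hσ', hg'⟩ :=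
    sq_side (margAE ρ) (sq_margAE_posSemidef ρ hρ)
  have trd : ∀ {n : Type _} [Fintype n] [DecidableEq n] (W : Matrix n n ℂ) (r : n → ℝ),
      Wᴴ * W = 1 → (W * diagonal (fun i => (r i : ℂ)) * Wᴴ).trace = ((∑ i, r i : ℝ) : ℂ) := by
    intro n _ _ W r hW
    rw [Matrix.trace_mul_comm, ← Matrix.mul_assoc, hW, Matrix.one_mul, Matrix.trace_diagonal]
    simp
  have trd' : ∀ {n : Type _} [Fintype n] [DecidableEq n] (W : Matrix n n ℂ) (r : n → ℝ),
      Wᴴ * W = 1 → (W * diagonal (fun i => (r i : ℂ)) * Wᴴ).trace = ((∑ i, r i : ℝ) : ℂ) := by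
    intro n _ _ W r hW
    rw [Matrix.trace_mul_comm, ← Matrix.mul_assoc, hW, Matrix.one_mul, Matrix.trace_diagonal]
    simp
  have hsum : ∑ j, p' j = ∑ j, p j := by
    have h1 := trd U p hU
    have h2 := trd' U' p' hU'
    rw [← hd] at h1
    rw [← hd'] at h2
    have h3 : (margAE ρ).trace = ρ.trace := by
      simp only [Matrix.trace, Matrix.diag, margAE, Fintype.sum_prod_type]
      refine Finset.sum_congr rfl fun x _ => ?_
      rw [Finset.sum_comm]
    rw [h1, h2] at h3
    exact_mod_cast h3
  have main : ∀ c : ℝ, 0 < c →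
      ∑ j, p' j * Real.log (p' j) - ∑ i, q' i * Real.log (q' i + Fintype.card b * c)
      ≤ ∑ j, p j * Real.log (p j) - ∑ i, q i * Real.log (q i + 1 * c) := by
    intro c hc
    have hqc : ∀ i : a × b × e, 0 < q i.2 + c := fun i => add_pos_of_nonneg_of_pos (hq _) hc
    have hqc' : ∀ i : a × e, 0 < q' i.2 + Fintype.card b * c := fun i =>
      add_pos_of_nonneg_of_pos (hq' _) (mul_pos hb' hc)
    have hm := sq_log_mono p (fun i => q i.2 + c) (Vᴴ * U) p'
      (fun i => q' i.2 + Fintype.card b * c) (V'ᴴ * U') hp hqc hp' hqc'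
      (sq_col_sum U V hU hV) (sq_col_sum U' V' hU' hV') hsum
      (fun s hs => sq_mono sqEmb sqEmb_star sqEmb_mul ρ _ U V p _ (margAE ρ) _ U' V' p' _
        hU hV hV2 hU' hV2' hd (hσ c) hd' (hσ' (Fintype.card b * c)) (sqEmb_trace ρ)
        (fun Z => by rw [sqEmb_trace, sq_margAE_one_kron]) hp hqc hp' hqc' s hs)
    rw [hg (fun i => Real.log (q i + c)),
      hg' (fun i => Real.log (q' i + Fintype.card b * c))] at hm
    rw [one_mul]
    exact hm
  have lim := le_of_tendsto_of_tendsto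
    ((sq_tendsto_entropy q' (Fintype.card b)).const_sub (∑ j, p' j * Real.log (p' j)))
    ((sq_tendsto_entropy q 1).const_sub (∑ j, p j * Real.log (p j)))
    (by filter_upwards [self_mem_nhdsWithin] with c hc using main c hc)
  have hlog : 0 < Real.log 2 := Real.log_pos (by norm_num)
  have e1 : margBE ρ = ptraceL ρ := rfl
  have e2 : margE ρ = ptraceL (margAE ρ) := rfl
  refine nonneg_of_mul_nonneg_left ?_ hlog
  rw [condMutualInfo, e1, e2]
  simp only [sub_mul, add_mul]
  rw [hS1, hS2, hS1', hS2']
  linarith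

/-! ### The classical extension of a separable state -/

lemma sq_pure_ensemble_entropy {x : Type*} [Fintype x] (n : ℕ) (p : Fin n → ℝ)
    (v : Fin n → x → ℂ) (hv : ∀ i, ∑ a, ‖v i a‖ ^ 2 = 1) (ρ : Matrix x x ℂ)
    (hρ : ∀ a b, ρ a b = ∑ i, (p i : ℂ) * (v i a * star (v i b)))
    (ho : ∀ i j, i ≠ j → ∀ a, star (v i a) * v j a = 0) :
    vonNeumannEntropy ρ = vonNeumannEntropy (diagonal (fun i => (p i : ℂ))) := by
  let V : Matrix x (Fin n) ℂ := fun a i => v i a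
  have hV : Vᴴ * V = 1 := by
    ext i j
    rw [Matrix.mul_apply]
    by_cases hij : i = j
    · subst hij
      rw [Matrix.one_apply_eq]
      have := congrArg (fun r : ℝ => (r : ℂ)) (hv i)
      simp only [Complex.ofReal_sum, Complex.ofReal_one] at this
      rw [← this]
      refine Finset.sum_congr rfl fun a _ => ?_
      rw [← Complex.normSq_eq_norm_sq, Complex.normSq_eq_conj_mul_self]
      rfl
    · rw [Matrix.one_apply_ne hij]
      exact Finset.sum_eq_zero fun a _ => ho i j hij a
  have hd : (diagonal (fun i => (p i : ℂ))).IsHermitian := by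
    rw [Matrix.isHermitian_diagonal_iff]
    intro i
    simp [IsSelfAdjoint]
  have h1 : ρ = V * (diagonal (fun i => (p i : ℂ)) * Vᴴ) := by
    ext a b
    rw [hρ, Matrix.mul_apply]
    refine Finset.sum_congr rfl fun i _ => ?_
    rw [Matrix.diagonal_mul, conjTranspose_apply]
    ring
  have h2 : (diagonal (fun i => (p i : ℂ)) * Vᴴ) * V = diagonal (fun i => (p i : ℂ)) := by
    rw [Matrix.mul_assoc, hV, Matrix.mul_one]
  have h3 : (V * (diagonal (fun i => (p i : ℂ)) * Vᴴ)).IsHermitian := by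
    rw [← Matrix.mul_assoc]
    exact Matrix.isHermitian_mul_mul_conjTranspose V hd
  rw [h1, sq_entropy_mul_comm _ _ h3 (by rw [h2]; exact hd), h2]


lemma sq_unit {x : Type*} [Fintype x] (v : x → ℂ) (hv : ∑ a, ‖v a‖ ^ 2 = 1) :
    ∑ a, v a * star (v a) = 1 := by
  have := congrArg (fun r : ℝ => (r : ℂ)) hv
  simp only [Complex.ofReal_sum, Complex.ofReal_one] at this
  rw [← this]
  refine Finset.sum_congr rfl fun a _ => ?_
  rw [← Complex.normSq_eq_norm_sq, Complex.normSq_eq_conj_mul_self, mul_comm]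
  rfl

lemma sq_unit_iff {x : Type*} [Fintype x] (v : x → ℂ) (hv : ∑ a, v a * star (v a) = 1) :
    ∑ a, ‖v a‖ ^ 2 = 1 := by
  have h := congrArg Complex.re hv
  rw [Complex.re_sum, Complex.one_re] at h
  rw [← h]
  refine Finset.sum_congr rfl fun a _ => ?_
  rw [← Complex.normSq_eq_norm_sq, Complex.normSq_apply]
  simp

def sqDelta {n : ℕ} (i e : Fin n) : ℂ := if e = i then 1 else 0

lemma sqDelta_star {n : ℕ} (i e : Fin n) : star (sqDelta i e) = sqDelta i e := by
  unfold sqDelta; split_ifs <;> simp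

lemma sqDelta_sum {n : ℕ} (i : Fin n) : ∑ e, sqDelta i e * sqDelta i e = 1 := by
  simp [sqDelta]

lemma sqDelta_ne {n : ℕ} {i j : Fin n} (h : i ≠ j) (e : Fin n) :
    sqDelta i e * sqDelta j e = 0 := by
  unfold sqDelta
  split_ifs with h1 h2 <;> simp
  exact h (h1.symm.trans h2)

/-- The extension of a separable state by a classical register. -/
def sqExt {a b : Type*} {n : ℕ} (p : Fin n → ℝ) (ψ : Fin n → a → ℂ) (φ : Fin n → b → ℂ) :
    Matrix (a × b × Fin n) (a × b × Fin n) ℂ :=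
  ∑ i, (p i : ℂ) • Matrix.vecMulVec (fun x => ψ i x.1 * φ i x.2.1 * sqDelta i x.2.2)
    (star fun x => ψ i x.1 * φ i x.2.1 * sqDelta i x.2.2)

lemma sqExt_apply {a b : Type*} {n : ℕ} (p : Fin n → ℝ) (ψ : Fin n → a → ℂ)
    (φ : Fin n → b → ℂ) (x y) : sqExt p ψ φ x y = ∑ i, (p i : ℂ) *
      ((ψ i x.1 * φ i x.2.1 * sqDelta i x.2.2) *
        star (ψ i y.1 * φ i y.2.1 * sqDelta i y.2.2)) := by
  simp [sqExt, Matrix.sum_apply, Matrix.vecMulVec_apply]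

section
variable {a b : Type*} [Fintype a] [Fintype b] {n : ℕ} (p : Fin n → ℝ) (ψ : Fin n → a → ℂ)
  (φ : Fin n → b → ℂ)

lemma sqExt_margAE (hφ : ∀ i, ∑ x, φ i x * star (φ i x) = 1) (x y) :
    margAE (sqExt p ψ φ) x y = ∑ i, (p i : ℂ) *
      ((ψ i x.1 * sqDelta i x.2) * star (ψ i y.1 * sqDelta i y.2)) := by
  simp only [margAE, sqExt_apply]
  rw [Finset.sum_comm]
  refine Finset.sum_congr rfl fun i _ => ?_
  rw [← Finset.mul_sum]
  congr 1
  rw [← mul_one (ψ i x.1 * _ * _), ← hφ i, Finset.mul_sum]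
  refine Finset.sum_congr rfl fun z _ => ?_
  simp only [star_mul']
  ring

lemma sqExt_margBE (hψ : ∀ i, ∑ x, ψ i x * star (ψ i x) = 1) (x y) :
    margBE (sqExt p ψ φ) x y = ∑ i, (p i : ℂ) *
      ((φ i x.1 * sqDelta i x.2) * star (φ i y.1 * sqDelta i y.2)) := by
  simp only [margBE, sqExt_apply]
  rw [Finset.sum_comm]
  refine Finset.sum_congr rfl fun i _ => ?_
  rw [← Finset.mul_sum]
  congr 1
  rw [← mul_one (φ i x.1 * _ * _), ← hψ i, Finset.mul_sum]
  refine Finset.sum_congr rfl fun z _ => ?_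
  simp only [star_mul']
  ring

lemma sqExt_margE (hψ : ∀ i, ∑ x, ψ i x * star (ψ i x) = 1)
    (hφ : ∀ i, ∑ x, φ i x * star (φ i x) = 1) (x y) :
    margE (sqExt p ψ φ) x y = ∑ i, (p i : ℂ) * (sqDelta i x * star (sqDelta i y)) := by
  have : margE (sqExt p ψ φ) x y = ∑ z, margAE (sqExt p ψ φ) (z, x) (z, y) := rfl
  rw [this]
  simp only [sqExt_margAE p ψ φ hφ]
  rw [Finset.sum_comm]
  refine Finset.sum_congr rfl fun i _ => ?_
  rw [← Finset.mul_sum]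
  congr 1
  rw [← mul_one (sqDelta i x * _), ← hψ i, Finset.mul_sum]
  refine Finset.sum_congr rfl fun z _ => ?_
  simp only [star_mul']
  ring

lemma sqExt_margAB : margAB (sqExt p ψ φ) =
    ∑ i, (p i : ℂ) • (outer (ψ i) ⊗ₖ outer (φ i)) := by
  ext x y
  simp only [margAB, sqExt_apply, Matrix.sum_apply, Matrix.smul_apply, kroneckerMap_apply, outer,
    Matrix.vecMulVec_apply, Pi.star_apply, smul_eq_mul]
  rw [Finset.sum_comm]
  refine Finset.sum_congr rfl fun i _ => ?_
  rw [← Finset.mul_sum]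
  congr 1
  rw [← mul_one (ψ i x.1 * _ * _), ← sqDelta_sum i, Finset.mul_sum]
  refine Finset.sum_congr rfl fun z _ => ?_
  simp only [star_mul', sqDelta_star]
  ring

lemma sqExt_unit (hψ : ∀ i, ∑ x, ψ i x * star (ψ i x) = 1)
    (hφ : ∀ i, ∑ x, φ i x * star (φ i x) = 1) (i : Fin n) :
    ∑ x : a × b × Fin n, (ψ i x.1 * φ i x.2.1 * sqDelta i x.2.2) *
        star (ψ i x.1 * φ i x.2.1 * sqDelta i x.2.2) = 1 := by
  have h : (∑ x, ψ i x * star (ψ i x)) * ((∑ y, φ i y * star (φ i y)) *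
      ∑ e, sqDelta i e * sqDelta i e) = 1 := by
    rw [hψ, hφ, sqDelta_sum]; simp
  rw [← h, Finset.sum_mul_sum, Finset.sum_mul_sum, Fintype.sum_prod_type]
  refine Finset.sum_congr rfl fun x _ => ?_
  rw [Fintype.sum_prod_type]
  refine Finset.sum_congr rfl fun y _ => ?_
  rw [Finset.mul_sum]
  refine Finset.sum_congr rfl fun e _ => ?_
  simp only [star_mul', sqDelta_star]
  ring

lemma sqExt_isState (hp : ∀ i, 0 ≤ p i) (hp1 : ∑ i, p i = 1)
    (hψ : ∀ i, ∑ x, ψ i x * star (ψ i x) = 1)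
    (hφ : ∀ i, ∑ x, φ i x * star (φ i x) = 1) : IsState (sqExt p ψ φ) := by
  constructor
  · refine Matrix.posSemidef_sum _ fun i _ => ?_
    exact (Matrix.posSemidef_vecMulVec_self_star _).smul (by exact_mod_cast hp i)
  · simp only [Matrix.trace, Matrix.diag, sqExt_apply]
    rw [Finset.sum_comm]
    simp only [← Finset.mul_sum, sqExt_unit ψ φ hψ hφ, mul_one]
    exact_mod_cast hp1

lemma sqExt_condMutualInfo (hψ : ∀ i, ∑ x, ψ i x * star (ψ i x) = 1)
    (hφ : ∀ i, ∑ x, φ i x * star (φ i x) = 1) : condMutualInfo (sqExt p ψ φ) = 0 := by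
  have mulsum : ∀ {x : Type _} [Fintype x] (f : x → ℂ) (i : Fin n), ∑ z, f z * star (f z) = 1 →
      ∑ z : x × Fin n, (f z.1 * sqDelta i z.2) * star (f z.1 * sqDelta i z.2) = 1 := by
    intro x _ f i hf
    have h : (∑ x, f x * star (f x)) * (∑ e, sqDelta i e * sqDelta i e) = 1 := by
      rw [hf, sqDelta_sum]; simp
    rw [← h, Finset.sum_mul_sum, Fintype.sum_prod_type]
    refine Finset.sum_congr rfl fun x _ => Finset.sum_congr rfl fun e _ => ?_
    simp only [star_mul', sqDelta_star]
    ring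
  have mulsum' : ∀ {x : Type _} [Fintype x] (f : x → ℂ) (i : Fin n), ∑ z, f z * star (f z) = 1 →
      ∑ z : x × Fin n, (f z.1 * sqDelta i z.2) * star (f z.1 * sqDelta i z.2) = 1 := by
    intro x _ f i hf
    have h : (∑ x, f x * star (f x)) * (∑ e, sqDelta i e * sqDelta i e) = 1 := by
      rw [hf, sqDelta_sum]; simp
    rw [← h, Finset.sum_mul_sum, Fintype.sum_prod_type]
    refine Finset.sum_congr rfl fun x _ => Finset.sum_congr rfl fun e _ => ?_
    simp only [star_mul', sqDelta_star]
    ring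
  have orth : ∀ (i j : Fin n), i ≠ j → ∀ (e : Fin n) (u w : ℂ),
      star (u * sqDelta i e) * (w * sqDelta j e) = 0 := by
    intro i j hij e u w
    rw [star_mul', sqDelta_star]
    linear_combination (star u * w) * sqDelta_ne hij e
  have e1 := sq_pure_ensemble_entropy n p (fun i (x : a × Fin n) => ψ i x.1 * sqDelta i x.2)
      (fun i => sq_unit_iff _ (mulsum (ψ i) i (hψ i))) (margAE (sqExt p ψ φ))
      (sqExt_margAE p ψ φ hφ) (fun i j hij x => orth i j hij _ _ _)
  have e2 := sq_pure_ensemble_entropy n p (fun i (x : b × Fin n) => φ i x.1 * sqDelta i x.2)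
      (fun i => sq_unit_iff _ (mulsum' (φ i) i (hφ i))) (margBE (sqExt p ψ φ))
      (sqExt_margBE p ψ φ hψ) (fun i j hij x => orth i j hij _ _ _)
  have e3 := sq_pure_ensemble_entropy n p (fun i (x : Fin n) => sqDelta i x)
      (fun i => sq_unit_iff _ (by simpa only [sqDelta_star] using sqDelta_sum i))
      (margE (sqExt p ψ φ))
      (sqExt_margE p ψ φ hψ hφ)
      (fun i j hij x => by rw [sqDelta_star]; exact sqDelta_ne hij x)
  have e4 := sq_pure_ensemble_entropy n p
      (fun i (x : a × b × Fin n) => ψ i x.1 * φ i x.2.1 * sqDelta i x.2.2)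
      (fun i => sq_unit_iff _ (sqExt_unit ψ φ hψ hφ i)) (sqExt p ψ φ)
      (sqExt_apply p ψ φ) (fun i j hij x => orth i j hij _ _ _)
  rw [condMutualInfo, e1, e2, e3, e4]
  ring

end

/-- Squashed entanglement vanishes on separable states. -/
theorem squashedEntanglement_eq_zero_of_separable
    {A B : Type*} [Fintype A] [Fintype B]
    (ρ : Matrix (A × B) (A × B) ℂ)
    (n : ℕ) (p : Fin n → ℝ) (ψ : Fin n → A → ℂ) (φ : Fin n → B → ℂ)
    (hp : ∀ i, 0 ≤ p i) (hp1 : (∑ i, p i) = 1)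
    (hψ : ∀ i, ∑ a, ‖ψ i a‖ ^ 2 = 1) (hφ : ∀ i, ∑ b, ‖φ i b‖ ^ 2 = 1)
    (hsep : ρ = ∑ i, (p i : ℂ) • (outer (ψ i) ⊗ₖ outer (φ i))) :
    Esq ρ = 0 := by
  have hψ' := fun i => sq_unit (ψ i) (hψ i)
  have hφ' := fun i => sq_unit (φ i) (hφ i)
  refine IsLeast.csInf_eq ⟨⟨n, sqExt p ψ φ, sqExt_isState p ψ φ hp hp1 hψ' hφ', ?_, ?_⟩, ?_⟩
  · rw [sqExt_margAB, hsep]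
  · rw [sqExt_condMutualInfo p ψ φ hψ' hφ', mul_zero]
  · rintro x ⟨d, ρE, hs, -, rfl⟩
    exact mul_nonneg (by norm_num) (sq_ssa ρE hs)

end
end
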